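/- Let N₁ ⊆ M_{m₁} and N₂ ⊆ M_{m₂} be unital *-subalgebras. Then for every 1 ≤ p ≤ ∞: D_{p,cb}(M_{m₁} ⊗ M_{m₂} ‖ N₁ ⊗ N₂) ≤ D_{p,cb}(M_{m₁}‖N₁) + D_{∞,cb}(M_{m₂}‖N₂). In particular, for p = 1 and p = ∞ one has additivity: D_cb(M_{m₁} ⊗ M_{m₂} ‖ N₁ ⊗ N₂) = D_cb(M_{m₁}‖N₁) + D_cb(M_{m₂}‖N₂) and D_{∞,cb}(M_{m₁} ⊗ M_{m₂} ‖ N₁ ⊗ N₂) = D_{∞,cb}(M_{m₁}‖N₁) + D_{∞,cb}(M_{m₂}‖N₂). -/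

import Mathlib

open scoped ENNReal Classical ComplexOrder
open Matrix

noncomputable section

namespace GJL

variable {n : Type*} [Fintype n] [DecidableEq n]

/-- `Mat n` is the matrix *-algebra with rows and columns indexed by `n`. -/
abbrev Mat (n : Type*) [Fintype n] [DecidableEq n] := Matrix n n ℂ

/-- A density matrix: positive semidefinite with trace one. -/
def IsDensity (ρ : Mat n) : Prop := ρ.PosSemidef ∧ ρ.trace = 1

/-- The real part of the (matrix) trace. -/
def traceR (A : Mat n) : ℝ := (A.trace).re

/-- Real matrix powers via the continuous functional calculus.  For positive
semidefinite matrices and negative exponents this is the generalized inverse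
power on the support, since `(0 : ℝ) ^ r = 0` for `r ≠ 0`. -/
def mpow (A : Mat n) (r : ℝ) : Mat n := cfc (fun x : ℝ => x ^ r) A

/-- Matrix logarithm on the support (`Real.log 0 = 0`). -/
def mlog (A : Mat n) : Mat n := cfc Real.log A

/-- Schatten `p`-norm `(Tr ((x* x)^(p/2)))^(1/p)`. -/
def snorm (p : ℝ) (x : Mat n) : ℝ := (traceR (mpow (xᴴ * x) (p/2))) ^ (1/p)

/-- Operator norm `‖x‖_∞`. -/
def opNorm (x : Mat n) : ℝ := ‖(Matrix.toEuclideanCLM (𝕜 := ℂ) x : EuclideanSpace ℂ n →L[ℂ] EuclideanSpace ℂ n)‖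

/-- The support projection of `ρ` is dominated by that of `σ` (for positive
semidefinite matrices: `ker σ ⊆ ker ρ`). -/
def suppLe (ρ σ : Mat n) : Prop := ∀ v, σ.mulVec v = 0 → ρ.mulVec v = 0

/-- `e` is the support projection of `ρ`. -/
def IsSupportProj (ρ e : Mat n) : Prop :=
  e.IsHermitian ∧ e * e = e ∧ ∀ v, e.mulVec v = 0 ↔ ρ.mulVec v = 0

/-- `D_∞(ρ‖σ) = log min {λ ≥ 0 | ρ ≤ λ σ}`, `⊤` if no such `λ` exists. -/
def Dinf (ρ σ : Mat n) : EReal :=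
  if ∃ c : ℝ, 0 ≤ c ∧ (c • σ - ρ).PosSemidef then
    ((Real.log (sInf {c : ℝ | 0 ≤ c ∧ (c • σ - ρ).PosSemidef}) : ℝ) : EReal)
  else ⊤

/-- Umegaki relative entropy `D(ρ‖σ) = Tr(ρ log ρ - ρ log σ)`, `⊤` if the
support condition fails. -/
def DU (ρ σ : Mat n) : EReal :=
  if suppLe ρ σ then ((traceR (ρ * mlog ρ - ρ * mlog σ) : ℝ) : EReal) else ⊤

/-- The sandwiched matrix `σ^{(1-p)/(2p)} ρ σ^{(1-p)/(2p)}`; note that for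
`p > 1` the exponent `(1-p)/(2p)` equals `-1/(2p')` with `1/p + 1/p' = 1`. -/
def sandwich (p : ℝ) (ρ σ : Mat n) : Mat n :=
  mpow σ ((1 - p)/(2*p)) * ρ * mpow σ ((1 - p)/(2*p))

/-- The sandwiched Rényi relative entropy `D_p(ρ‖σ)` for `p ∈ [1/2, ∞]`:
for `p ∈ (1,∞)` it is `p' log ‖σ^{-1/(2p')} ρ σ^{-1/(2p')}‖_p
= (p-1)⁻¹ log Tr ((σ^{-1/(2p')} ρ σ^{-1/(2p')})^p)` when the support of `ρ` is
dominated by that of `σ` and `⊤` otherwise; for `p ∈ [1/2, 1)` it is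
`(p-1)⁻¹ log Tr ((σ^{(1-p)/(2p)} ρ σ^{(1-p)/(2p)})^p)` (`⊤` when the trace
vanishes, i.e. when the honest value is `+∞`); `D_1` is the Umegaki relative
entropy and `D_∞` the max-relative entropy. -/
def Dp (p : ℝ≥0∞) (ρ σ : Mat n) : EReal :=
  if p = ⊤ then Dinf ρ σ
  else if p = 1 then DU ρ σ
  else if 1 < p.toReal ∧ ¬ suppLe ρ σ then ⊤
  else if traceR (mpow (sandwich p.toReal ρ σ) p.toReal) = 0 then ⊤
  else (((p.toReal - 1)⁻¹ * Real.log (traceR (mpow (sandwich p.toReal ρ σ) p.toReal)) : ℝ) : EReal)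

/-- `D_p(ρ‖S) = inf { D_p(ρ‖σ) | σ a density in S }`. -/
def DpSet (p : ℝ≥0∞) (ρ : Mat n) (S : Set (Mat n)) : EReal :=
  ⨅ σ ∈ {σ ∈ S | IsDensity σ}, Dp p ρ σ

/-- `D_p(A‖S) = sup { D_p(ρ‖S) | ρ a density in A }`. -/
def DpRel (p : ℝ≥0∞) (A S : Set (Mat n)) : EReal :=
  ⨆ ρ ∈ {ρ ∈ A | IsDensity ρ}, DpSet p ρ S

open scoped Kronecker in
/-- The algebraic tensor product `N₁ ⊗ N₂ ⊆ M_{n₁} ⊗ M_{n₂} = M_{n₁ × n₂}`,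
realized as the linear span of Kronecker products. -/
def tensorSpan {n₁ n₂ : Type*} [Fintype n₁] [DecidableEq n₁] [Fintype n₂] [DecidableEq n₂]
    (N₁ : Set (Mat n₁)) (N₂ : Set (Mat n₂)) : Set (Mat (n₁ × n₂)) :=
  ↑(Submodule.span ℂ {z : Mat (n₁ × n₂) | ∃ x ∈ N₁, ∃ y ∈ N₂, z = x ⊗ₖ y})

/-- `D_{p,cb}(M‖N) = sup_k D_p(M_k ⊗ M ‖ M_k ⊗ N)`. -/
def DpCb (p : ℝ≥0∞) (N : Set (Mat n)) : EReal :=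
  ⨆ k : ℕ, DpRel p Set.univ (tensorSpan (Set.univ : Set (Mat (Fin k))) N)

/-- `E` is the trace preserving conditional expectation onto `N`, i.e. the
orthogonal projection onto `N` with respect to the Hilbert–Schmidt inner
product `⟨x,y⟩ = Tr(x* y)`. -/
def IsCondExp (N : Set (Mat n)) (E : Mat n →ₗ[ℂ] Mat n) : Prop :=
  (∀ x, E x ∈ N) ∧ (∀ x ∈ N, E x = x) ∧
    ∀ x y, y ∈ N → ((E x)ᴴ * y).trace = (xᴴ * y).trace

/-- The Pimsner–Popa index constant
`λ(M:N) = max {c ≥ 0 | c x ≤ E(x) for all x ≥ 0}`. -/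
def ppIndex (E : Mat n →ₗ[ℂ] Mat n) : ℝ :=
  sSup {c : ℝ | 0 ≤ c ∧ ∀ x : Mat n, x.PosSemidef → (E x - c • x).PosSemidef}

/-- von Neumann entropy `H(ρ) = -Tr(ρ log ρ)`. -/
def vnEntropy (ρ : Mat n) : ℝ := - traceR (ρ * mlog ρ)

/-- The amplification `id_{M_k} ⊗ Φ` acting on `M_k ⊗ M_n = M_{k × n}`,
applying `Φ` blockwise. -/
def ampFun (k : Type*) [Fintype k] [DecidableEq k] (Φ : Mat n →ₗ[ℂ] Mat n)
    (X : Mat (k × n)) : Mat (k × n) :=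
  Matrix.of fun a b => Φ (Matrix.of fun s t => X (a.1, s) (b.1, t)) a.2 b.2

/-- Complete positivity: all amplifications `id_{M_k} ⊗ Φ` preserve positive
semidefiniteness. -/
def IsCP (Φ : Mat n →ₗ[ℂ] Mat n) : Prop :=
  ∀ (k : ℕ) (X : Mat (Fin k × n)), X.PosSemidef → (ampFun (Fin k) Φ X).PosSemidef

/-- Completely positive and trace preserving. -/
def IsCPTP (Φ : Mat n →ₗ[ℂ] Mat n) : Prop :=
  IsCP Φ ∧ ∀ x : Mat n, (Φ x).trace = x.trace



lemma cont_spec (A : Mat n) (f : ℝ → ℝ) : ContinuousOn f (spectrum ℝ A) :=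
  (Matrix.finite_real_spectrum (A := A)).continuousOn f

lemma mcfc_id {A : Mat n} (hA : A.IsHermitian) : cfc (fun x : ℝ => x) A = A := by
  have h : IsSelfAdjoint A := hA
  exact cfc_id' ℝ A h

lemma posSemidef_trace_mul_nonneg {A B : Mat n} (hA : A.PosSemidef) (hB : B.PosSemidef) :
    0 ≤ traceR (A * B) := by
  obtain ⟨C, rfl⟩ : ∃ C : Mat n, A = Cᴴ * C := by
    open scoped MatrixOrder in
    exact (CStarAlgebra.nonneg_iff_eq_star_mul_self).1 hA.nonneg
  have h := (hB.mul_mul_conjTranspose_same C).trace_nonneg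
  rw [Matrix.trace_mul_comm, ← Matrix.mul_assoc] at h
  exact (Complex.le_def.1 h).1

lemma resolution (A : Mat n) (hA : A.IsHermitian) :
    ∃ (Q : n → Mat n) (l : n → ℝ), (∀ i, (Q i).PosSemidef) ∧ (∀ i, (Q i).trace = 1) ∧
      ∑ i, Q i = 1 ∧ (∀ f : ℝ → ℝ, cfc f A = ∑ i, (f (l i) : ℂ) • Q i) ∧
      (∀ i, A * Q i = (l i : ℂ) • Q i) ∧ (∀ i, l i ∈ spectrum ℝ A) ∧
      (A.PosSemidef → ∀ i, 0 ≤ l i) := by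
  set U : Mat n := (hA.eigenvectorUnitary : Mat n) with hU
  have hUU : Uᴴ * U = 1 := Unitary.coe_star_mul_self hA.eigenvectorUnitary
  have hUU' : U * Uᴴ = 1 := Unitary.coe_mul_star_self hA.eigenvectorUnitary
  have hcfc : ∀ f : ℝ → ℝ, cfc f A = U * diagonal (fun i => (f (hA.eigenvalues i) : ℂ)) * Uᴴ := by
    intro f
    rw [hA.cfc_eq f, Matrix.IsHermitian.cfc, Unitary.conjStarAlgAut_apply]
    rfl
  have hdiag : ∀ f : n → ℂ, diagonal f = ∑ i, f i • Matrix.single i i (1 : ℂ) := by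
    intro f
    ext a b
    simp [Matrix.sum_apply, Matrix.single_apply, Matrix.diagonal_apply, ite_and]
  have hc : ∀ f : ℝ → ℝ, cfc f A =
      ∑ i, (f (hA.eigenvalues i) : ℂ) • (U * Matrix.single i i (1 : ℂ) * Uᴴ) := by
    intro f
    rw [hcfc, hdiag, Finset.mul_sum, Finset.sum_mul]
    refine Finset.sum_congr rfl fun i _ => ?_
    rw [Matrix.mul_smul, Matrix.smul_mul]
  refine ⟨fun i => U * Matrix.single i i (1 : ℂ) * Uᴴ, hA.eigenvalues, ?_, ?_, ?_, hc, ?_, ?_, ?_⟩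
  · intro i
    refine Matrix.PosSemidef.mul_mul_conjTranspose_same ?_ U
    have : Matrix.single i i (1 : ℂ) = diagonal (Pi.single i 1) := by
      rw [Matrix.diagonal_single]
    rw [this]
    refine Matrix.PosSemidef.diagonal ?_
    intro j
    by_cases h : j = i
    · subst h; simp
    · simp [h]
  · intro i
    simp only
    rw [Matrix.trace_mul_comm, ← Matrix.mul_assoc, hUU, Matrix.one_mul]
    simp
  · simp only
    rw [← Finset.sum_mul, ← Finset.mul_sum]
    have := hdiag (fun _ => 1)
    simp only [one_smul] at this
    rw [← this]
    simp [hUU']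
  · intro i
    have hid : A = U * diagonal (fun i => (hA.eigenvalues i : ℂ)) * Uᴴ := by
      conv_lhs => rw [← mcfc_id hA]
      rw [hcfc]
    simp only
    conv_lhs => rw [hid]
    rw [show U * diagonal (fun i => (hA.eigenvalues i : ℂ)) * Uᴴ * (U * single i i 1 * Uᴴ) =
      U * diagonal (fun i => (hA.eigenvalues i : ℂ)) * (Uᴴ * U) * single i i 1 * Uᴴ by
        simp only [Matrix.mul_assoc], hUU, Matrix.mul_one, Matrix.mul_assoc U]
    have h2 : diagonal (fun i => (hA.eigenvalues i : ℂ)) * single i i (1:ℂ) =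
        (hA.eigenvalues i : ℂ) • single i i (1:ℂ) := by
      ext a b
      by_cases h : i = a
      · subst h; simp [Matrix.diagonal_mul, Matrix.single_apply]
      · simp [Matrix.diagonal_mul, Matrix.single_apply, h]
    rw [h2, Matrix.mul_smul, Matrix.smul_mul]
  · exact hA.eigenvalues_mem_spectrum_real
  · intro h
    exact h.eigenvalues_nonneg

lemma traceR_sum {ι : Type*} (s : Finset ι) (f : ι → Mat n) :
    traceR (∑ i ∈ s, f i) = ∑ i ∈ s, traceR (f i) := by
  simp [traceR, Matrix.trace_sum]

lemma traceR_smul (c : ℝ) (A : Mat n) : traceR ((c : ℂ) • A) = c * traceR A := by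
  simp [traceR]

lemma traceR_sub (A B : Mat n) : traceR (A - B) = traceR A - traceR B := by
  simp [traceR]

lemma traceR_nonneg {A : Mat n} (hA : A.PosSemidef) : 0 ≤ traceR A :=
  (Complex.le_def.1 hA.trace_nonneg).1

lemma spectral (A B : Mat n) (hA : A.IsHermitian) (hB : B.PosSemidef) :
    ∃ (w l : n → ℝ), (∀ i, 0 ≤ w i) ∧ (∀ f : ℝ → ℝ, traceR (B * cfc f A) = ∑ i, w i * f (l i)) ∧
      (suppLe B A → ∀ i, l i = 0 → w i = 0) ∧ (A.PosSemidef → ∀ i, 0 ≤ l i) ∧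
      (∀ i, l i ∈ spectrum ℝ A) ∧ (∑ i, w i = traceR B) ∧ (∑ i, w i * l i = traceR (B * A)) := by
  obtain ⟨Q, l, hQ, hQ1, hQs, hf, hAQ, hl, hlp⟩ := resolution A hA
  have key : ∀ f : ℝ → ℝ, traceR (B * cfc f A) = ∑ i, traceR (B * Q i) * f (l i) := by
    intro f
    rw [hf, Finset.mul_sum, traceR_sum]
    refine Finset.sum_congr rfl fun i _ => ?_
    rw [Matrix.mul_smul, traceR_smul, mul_comm]
  refine ⟨fun i => traceR (B * Q i), l, fun i => posSemidef_trace_mul_nonneg hB (hQ i), key,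
    ?_, hlp, hl, ?_, ?_⟩
  · intro hs i hi
    have h0 : A * Q i = 0 := by rw [hAQ, hi]; simp
    have : B * Q i = 0 := by
      ext a b
      have h1 := hs (fun j => Q i j b) (by
        ext a'
        have := congrFun (congrFun h0 a') b
        simpa [Matrix.mul_apply, Matrix.mulVec, dotProduct] using this)
      have := congrFun h1 a
      simpa [Matrix.mul_apply, Matrix.mulVec, dotProduct] using this
    simp [this, traceR]
  · rw [← traceR_sum, ← Finset.mul_sum, hQs, Matrix.mul_one]
  · rw [← key (fun x => x), mcfc_id hA]

lemma traceR_cfc (A : Mat n) (hA : A.IsHermitian) (f : ℝ → ℝ) (hf : ∀ x ∈ spectrum ℝ A, 0 ≤ f x) :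
    0 ≤ traceR (cfc f A) := by
  obtain ⟨w, l, hw, h1, -, -, hl, -⟩ := spectral A 1 hA Matrix.PosSemidef.one
  have := h1 f
  rw [Matrix.one_mul] at this
  rw [this]
  exact Finset.sum_nonneg fun i _ => mul_nonneg (hw i) (hf _ (hl i))

lemma cfc_posSemidef (A : Mat n) (f : ℝ → ℝ) (hf : ∀ x ∈ spectrum ℝ A, 0 ≤ f x) :
    (cfc f A).PosSemidef := by
  open scoped MatrixOrder in
  exact (cfc_nonneg hf).posSemidef

lemma spec_nonneg {A : Mat n} (hA : A.PosSemidef) : ∀ x ∈ spectrum ℝ A, 0 ≤ x := by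
  intro x hx
  rw [hA.1.spectrum_real_eq_range_eigenvalues] at hx
  obtain ⟨i, rfl⟩ := hx
  exact hA.eigenvalues_nonneg i

lemma spec_pos {A : Mat n} (hA : A.PosDef) : ∀ x ∈ spectrum ℝ A, 0 < x := by
  intro x hx
  rw [hA.1.spectrum_real_eq_range_eigenvalues] at hx
  obtain ⟨i, rfl⟩ := hx
  exact hA.eigenvalues_pos i

/-- Operator monotonicity of powers in `[0,1]`. -/
lemma mpow_mono {A B : Mat n} (hA : A.PosSemidef) (hB : B.PosSemidef) (h : (B - A).PosSemidef)
    {r : ℝ} (hr : r ∈ Set.Icc (0:ℝ) 1) : (mpow B r - mpow A r).PosSemidef := by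
  open scoped MatrixOrder Matrix.Norms.L2Operator in
  have h1 : A ≤ B := h
  have h2 := CFC.rpow_le_rpow hr h1
  rw [CFC.rpow_eq_cfc_real hA.nonneg, CFC.rpow_eq_cfc_real hB.nonneg] at h2
  exact h2


lemma traceR_mul_comm (A B : Mat n) : traceR (A * B) = traceR (B * A) := by
  simp [traceR, Matrix.trace_mul_comm A B]

lemma traceR_add (A B : Mat n) : traceR (A + B) = traceR A + traceR B := by
  simp [traceR]

lemma traceR_rsmul (c : ℝ) (A : Mat n) : traceR (c • A) = c * traceR A := by
  simp [traceR]

lemma traceR_mul_mono {A B C : Mat n} (hA : A.PosSemidef) (h : (C - B).PosSemidef) :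
    traceR (A * B) ≤ traceR (A * C) := by
  have := posSemidef_trace_mul_nonneg hA h
  rw [Matrix.mul_sub, traceR_sub] at this
  linarith

lemma contr_symm {B : Mat n} (h : (1 - Bᴴ * B).PosSemidef) : (1 - B * Bᴴ).PosSemidef := by
  have h1 := h.mul_mul_conjTranspose_same B
  have h2 := Matrix.posSemidef_conjTranspose_mul_self (1 - B * Bᴴ)
  have h3 := h1.add h2
  convert h3 using 1
  simp only [Matrix.conjTranspose_sub, Matrix.conjTranspose_one, Matrix.conjTranspose_mul,
    Matrix.conjTranspose_conjTranspose]
  noncomm_ring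

lemma jensen_rpow {P Z : Mat n} (hP : P.PosSemidef) (hP1 : traceR P ≤ 1) (hZ : Z.PosSemidef)
    {p : ℝ} (hp : 1 ≤ p) : (traceR (P * Z)) ^ p ≤ traceR (P * mpow Z p) := by
  obtain ⟨w, l, hw, hf, -, hl, -, hs, hid⟩ := spectral Z P hZ.1 hP
  have hl := hl hZ
  rw [mpow, hf, ← hid]
  have h := Real.inner_le_weight_mul_Lp_of_nonneg Finset.univ hp w l hw hl
  have hp0 : p ≠ 0 := by linarith
  have hS0 : 0 ≤ ∑ i, w i * l i ^ p :=
    Finset.sum_nonneg fun i _ => mul_nonneg (hw i) (Real.rpow_nonneg (hl i) _)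
  have hw1 : (∑ i, w i) ^ (1 - p⁻¹) ≤ 1 := by
    apply Real.rpow_le_one (Finset.sum_nonneg fun i _ => hw i) (by rw [hs]; exact hP1)
    have : p⁻¹ ≤ 1 := inv_le_one_of_one_le₀ hp
    linarith
  have h2 : ∑ i, w i * l i ≤ (∑ i, w i * l i ^ p) ^ p⁻¹ := by
    refine h.trans ?_
    refine mul_le_of_le_one_left (Real.rpow_nonneg hS0 _) hw1
  calc (∑ i, w i * l i) ^ p ≤ ((∑ i, w i * l i ^ p) ^ p⁻¹) ^ p := by
        apply Real.rpow_le_rpow _ h2 (by linarith)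
        exact Finset.sum_nonneg fun i _ => mul_nonneg (hw i) (hl i)
    _ = _ := by rw [← Real.rpow_mul hS0, inv_mul_cancel₀ hp0, Real.rpow_one]

lemma trace_contr_pow {B Z : Mat n} (hZ : Z.PosSemidef) (hB : (1 - Bᴴ * B).PosSemidef)
    {p : ℝ} (hp : 1 ≤ p) : traceR (mpow (Bᴴ * Z * B) p) ≤ traceR (mpow Z p) := by
  have hX : (Bᴴ * Z * B).PosSemidef := hZ.conjTranspose_mul_mul_same B
  obtain ⟨Q, x, hQ, hQ1, hQs, hf, hAQ, -, -⟩ := resolution _ hX.1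
  have hQ1' : ∀ i, traceR (Q i) = 1 := fun i => by simp [traceR, hQ1]
  have hZp : (mpow Z p).PosSemidef :=
    cfc_posSemidef _ _ fun x hx => Real.rpow_nonneg (spec_nonneg hZ x hx) _
  have hP : ∀ i, (B * Q i * Bᴴ).PosSemidef := fun i => (hQ i).mul_mul_conjTranspose_same B
  have hx : ∀ i, x i = traceR (B * Q i * Bᴴ * Z) := by
    intro i
    have h1 : traceR (Bᴴ * Z * B * Q i) = x i := by rw [hAQ, traceR_smul, hQ1', mul_one]
    rw [← h1, show Bᴴ * Z * B * Q i = (Bᴴ * Z) * (B * Q i) by simp only [Matrix.mul_assoc],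
      traceR_mul_comm]
    simp only [Matrix.mul_assoc]
  have hPt : ∀ i, traceR (B * Q i * Bᴴ) ≤ 1 := by
    intro i
    rw [traceR_mul_comm, ← Matrix.mul_assoc, traceR_mul_comm]
    refine (traceR_mul_mono (hQ i) hB).trans ?_
    rw [Matrix.mul_one, hQ1']
  calc traceR (mpow (Bᴴ * Z * B) p) = ∑ i, x i ^ p := by
        rw [mpow, hf, traceR_sum]
        refine Finset.sum_congr rfl fun i _ => ?_
        rw [traceR_smul, hQ1', mul_one]
    _ ≤ ∑ i, traceR (B * Q i * Bᴴ * mpow Z p) := by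
        refine Finset.sum_le_sum fun i _ => ?_
        rw [hx]
        exact jensen_rpow (hP i) (hPt i) hZ hp
    _ = traceR (mpow Z p * (B * Bᴴ)) := by
        rw [← traceR_sum, ← Finset.sum_mul, ← Finset.sum_mul, ← Finset.mul_sum, hQs,
          Matrix.mul_one, traceR_mul_comm]
    _ ≤ traceR (mpow Z p * 1) := traceR_mul_mono hZp (contr_symm hB)
    _ = _ := by rw [Matrix.mul_one]

lemma mpow_isHermitian (A : Mat n) (r : ℝ) : (mpow A r).IsHermitian := by
  have : IsSelfAdjoint (mpow A r) := cfc_predicate _ _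
  exact this

lemma mpow_smul {A : Mat n} (hA : A.PosSemidef) {t : ℝ} (ht : 0 ≤ t) (r : ℝ) :
    mpow (t • A) r = t ^ r • mpow A r := by
  have hA' : IsSelfAdjoint A := hA.1
  unfold mpow
  rw [← cfc_comp_smul t (fun x : ℝ => x ^ r) A (Set.Finite.continuousOn
      ((Matrix.finite_real_spectrum (A := A)).image _) _) hA',
    ← cfc_smul (t ^ r) (fun x : ℝ => x ^ r) A (cont_spec _ _)]
  refine cfc_congr fun x hx => ?_
  have := spec_nonneg hA x hx
  simp [Real.mul_rpow ht this]

lemma mpow_mul_mpow {A : Mat n} (r s : ℝ) (f : ℝ → ℝ)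
    (h : ∀ x ∈ spectrum ℝ A, x ^ r * x ^ s = f x) : mpow A r * mpow A s = cfc f A := by
  unfold mpow
  rw [← cfc_mul _ _ _ (cont_spec _ _) (cont_spec _ _)]
  exact cfc_congr h

lemma main_p {ρ σ : Mat n} (hρ : ρ.PosSemidef) (hσ : σ.PosDef) {c : ℝ} (hc : 0 < c)
    (h : (c • σ - ρ).PosSemidef) {p : ℝ} (hp : 1 < p) :
    traceR (mpow (sandwich p ρ σ) p) ≤ c ^ (p - 1) * traceR ρ := by
  have hp0 : 0 < p := by linarith
  set a : ℝ := (p - 1) / p with ha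
  have ha0 : 0 < a := div_pos (by linarith) hp0
  have ha1 : a ≤ 1 := by rw [ha, div_le_one hp0]; linarith
  have hap : a * p = p - 1 := by rw [ha]; field_simp
  have he : (1 - p) / (2 * p) = - (a / 2) := by rw [ha]; field_simp; ring
  set S := mpow σ (-(a/2)) with hS
  have hSh : Sᴴ = S := mpow_isHermitian _ _
  have hcσ : (c • σ).PosSemidef := hσ.posSemidef.smul hc.le
  have h1 := mpow_mono hρ hcσ h (r := a) ⟨ha0.le, ha1⟩
  rw [mpow_smul hσ.posSemidef hc.le] at h1
  set R := mpow ρ (a/2) with hR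
  have hRh : Rᴴ = R := mpow_isHermitian _ _
  have hRR : R * R = mpow ρ a := by
    refine mpow_mul_mpow _ _ _ fun x hx => ?_
    have := spec_nonneg hρ x hx
    rw [← Real.rpow_add_of_nonneg this (by positivity) (by positivity)]
    ring_nf
  have hSS : S * mpow σ a * S = 1 := by
    have e1 : S * mpow σ a = cfc (fun x : ℝ => x ^ (a/2)) σ := by
      refine mpow_mul_mpow _ _ _ fun x hx => ?_
      rw [← Real.rpow_add (spec_pos hσ x hx)]
      ring_nf
    rw [e1]
    have hσ' : IsSelfAdjoint σ := hσ.1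
    rw [← cfc_one ℝ σ hσ']
    refine mpow_mul_mpow _ _ _ fun x hx => ?_
    rw [← Real.rpow_add (spec_pos hσ x hx)]
    simp
  set t : ℝ := c ^ (-(a/2)) with ht
  have htt : t * t = c ^ (-a) := by rw [ht, ← Real.rpow_add hc]; ring_nf
  have htc : t * t * c ^ a = 1 := by rw [htt, ← Real.rpow_add hc]; simp
  set B : Mat n := t • (R * S) with hB
  have hBh : Bᴴ = t • (S * R) := by
    rw [hB, Matrix.conjTranspose_smul, Matrix.conjTranspose_mul, hRh, hSh]; simp
  have hcontr : (1 - Bᴴ * B).PosSemidef := by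
    have h2 := (h1.mul_mul_conjTranspose_same S).smul (show 0 ≤ t * t from mul_self_nonneg t)
    convert h2 using 1
    rw [hBh, hB, hSh, Matrix.mul_sub, Matrix.sub_mul, smul_sub, Matrix.mul_smul S,
      Matrix.smul_mul (c ^ a), hSS, smul_smul, htc, one_smul, Matrix.smul_mul, Matrix.mul_smul,
      smul_smul, ← hRR]
    simp only [Matrix.mul_assoc]
  have hZ : (mpow ρ (1/p)).PosSemidef :=
    cfc_posSemidef _ _ fun x hx => Real.rpow_nonneg (spec_nonneg hρ x hx) _
  have hRZR : R * mpow ρ (1/p) * R = ρ := by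
    have e1 : R * mpow ρ (1/p) = mpow ρ (a/2 + 1/p) := by
      refine mpow_mul_mpow _ _ _ fun x hx => ?_
      rw [← Real.rpow_add_of_nonneg (spec_nonneg hρ x hx) (by positivity) (by positivity)]
    rw [e1]
    conv_rhs => rw [← mcfc_id hρ.1]
    refine mpow_mul_mpow _ _ _ fun x hx => ?_
    rw [← Real.rpow_add_of_nonneg (spec_nonneg hρ x hx) (by positivity) (by positivity)]
    have : a/2 + 1/p + a/2 = 1 := by rw [ha]; field_simp; ring
    rw [this, Real.rpow_one]
  have hsand : sandwich p ρ σ = c ^ a • (Bᴴ * mpow ρ (1/p) * B) := by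
    rw [sandwich, he, ← hS, hBh, hB, Matrix.smul_mul, Matrix.smul_mul, Matrix.mul_smul, smul_smul,
      smul_smul, show c ^ a * t * t = 1 by rw [← htc]; ring, one_smul]
    conv_lhs => rw [← hRZR]
    simp only [Matrix.mul_assoc]
  rw [hsand, mpow_smul (hZ.conjTranspose_mul_mul_same B) (by positivity), traceR_rsmul,
    ← Real.rpow_mul hc.le, hap]
  refine mul_le_mul_of_nonneg_left ?_ (by positivity)
  refine (trace_contr_pow hZ hcontr hp.le).trans (le_of_eq ?_)
  congr 1
  have hρ' : IsSelfAdjoint ρ := hρ.1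
  unfold mpow
  rw [← cfc_comp (fun x : ℝ => x ^ p) (fun x : ℝ => x ^ (1/p)) ρ hρ' (Set.Finite.continuousOn
      ((Matrix.finite_real_spectrum (A := ρ)).image _) _) (cont_spec _ _)]
  conv_rhs => rw [← mcfc_id hρ.1]
  refine cfc_congr fun x hx => ?_
  simp only [Function.comp]
  rw [← Real.rpow_mul (spec_nonneg hρ x hx)]
  field_simp
  simp

lemma main_one {ρ σ : Mat n} (hρ : ρ.PosSemidef) (hρ1 : traceR ρ = 1) (hσ : σ.PosDef) {c : ℝ}
    (hc : 0 < c) (h : (c • σ - ρ).PosSemidef) :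
    traceR (ρ * mlog ρ - ρ * mlog σ) ≤ Real.log c := by
  obtain ⟨v, r, hv, hfv, hv0, hr, -, hvs, -⟩ := spectral ρ ρ hρ.1 hρ
  obtain ⟨w, s, hw, hfw, -, -, hs, hws, -⟩ := spectral σ ρ hσ.1 hρ
  have hv0 := hv0 (fun _ h => h)
  have hs : ∀ i, 0 < s i := fun i => spec_pos hσ _ (hs i)
  have hr := hr hρ
  set f : ℝ → ℝ := fun a => ∑ i, v i * r i ^ a - c ^ a * ∑ i, w i * s i ^ a with hf
  have hf0 : f 0 = 0 := by simp [hf, hvs, hws]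
  have hneg : ∀ a ∈ Set.Ioo (0:ℝ) 1, f a ≤ 0 := by
    intro a ha
    have hcσ : (c • σ).PosSemidef := hσ.posSemidef.smul hc.le
    have h1 := mpow_mono hρ hcσ h (r := a) ⟨ha.1.le, ha.2.le⟩
    rw [mpow_smul hσ.posSemidef hc.le] at h1
    have h2 := traceR_mul_mono hρ h1
    rw [Matrix.mul_smul, traceR_rsmul] at h2
    unfold mpow at h2
    rw [hfv, hfw] at h2
    simp only [hf]
    linarith
  have hder : HasDerivAt f (∑ i, v i * Real.log (r i) -
      (Real.log c + ∑ i, w i * Real.log (s i))) 0 := by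
    have d1 : HasDerivAt (fun a : ℝ => ∑ i, v i * r i ^ a) (∑ i, v i * Real.log (r i)) 0 := by
      apply HasDerivAt.fun_sum
      intro i _
      by_cases h0 : r i = 0
      · rw [hv0 i h0]
        simpa using hasDerivAt_const (0:ℝ) (0:ℝ)
      · have hpos : 0 < r i := lt_of_le_of_ne (hr i) (Ne.symm h0)
        have := (Real.hasStrictDerivAt_const_rpow hpos 0).hasDerivAt.const_mul (v i)
        simpa using this
    have d2 : HasDerivAt (fun a : ℝ => ∑ i, w i * s i ^ a) (∑ i, w i * Real.log (s i)) 0 := by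
      apply HasDerivAt.fun_sum
      intro i _
      have := (Real.hasStrictDerivAt_const_rpow (hs i) 0).hasDerivAt.const_mul (w i)
      simpa using this
    have d3 := (Real.hasStrictDerivAt_const_rpow hc 0).hasDerivAt
    have := d1.fun_sub (d3.fun_mul d2)
    simpa [hws, hρ1] using this
  have hle : ∑ i, v i * Real.log (r i) - (Real.log c + ∑ i, w i * Real.log (s i)) ≤ 0 := by
    have : Filter.Tendsto (slope f 0) (nhdsWithin 0 (Set.Ioi 0)) (nhds (∑ i, v i * Real.log (r i) -
      (Real.log c + ∑ i, w i * Real.log (s i)))) := by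
      exact (hasDerivAt_iff_tendsto_slope.1 hder).mono_left
        (nhdsWithin_mono _ fun x hx => ne_of_gt hx)
    refine le_of_tendsto this ?_
    filter_upwards [Ioo_mem_nhdsGT (show (0:ℝ) < 1 by norm_num)] with a ha
    rw [slope_def_field, hf0]
    have := hneg a ha
    apply div_nonpos_of_nonpos_of_nonneg <;> linarith [ha.1]
  rw [traceR_sub]
  unfold mlog
  rw [hfv, hfw]
  linarith


lemma traceR_mpow_ne_zero {X : Mat n} (hX : X.PosSemidef) (h : 0 < traceR X) {p : ℝ} (hp : p ≠ 0) :
    traceR (mpow X p) ≠ 0 := by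
  intro h0
  obtain ⟨w, l, hw, hf, -, hl, -, -, hid⟩ := spectral X 1 hX.1 Matrix.PosSemidef.one
  have hl := hl hX
  have h1 := hf (fun x => x ^ p)
  rw [Matrix.one_mul] at h1 hid
  rw [mpow] at h0
  rw [h0] at h1
  have h2 := (Finset.sum_eq_zero_iff_of_nonneg (fun i _ =>
    mul_nonneg (hw i) (Real.rpow_nonneg (hl i) p))).1 h1.symm
  have h3 : ∑ i, w i * l i = 0 := by
    refine Finset.sum_eq_zero fun i hi => ?_
    rcases mul_eq_zero.1 (h2 i hi) with h4 | h4
    · rw [h4, zero_mul]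
    · rw [(Real.rpow_eq_zero (hl i) hp).1 h4, mul_zero]
  rw [hid] at h3
  linarith

lemma suppLe_of_le {ρ σ : Mat n} (hρ : ρ.PosSemidef) {c : ℝ} (h : (c • σ - ρ).PosSemidef) :
    suppLe ρ σ := by
  intro v hv
  rw [← hρ.dotProduct_mulVec_zero_iff]
  have h1 := h.dotProduct_mulVec_nonneg v
  have h2 := hρ.dotProduct_mulVec_nonneg v
  rw [Matrix.sub_mulVec, Matrix.smul_mulVec, hv] at h1
  simp at h1
  exact le_antisymm h1 h2

lemma traceR_one_of {ρ : Mat n} (h : IsDensity ρ) : traceR ρ = 1 := by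
  simp [traceR, h.2]

lemma Dp_upper {ρ σ : Mat n} (hρ : IsDensity ρ) (hσ : σ.PosDef) (hσ1 : IsDensity σ) {c : ℝ}
    (hc : 0 < c) (h : (c • σ - ρ).PosSemidef) (p : ℝ≥0∞) (hp : 1 ≤ p) :
    Dp p ρ σ ≤ (Real.log c : EReal) := by
  have hρ1 := traceR_one_of hρ
  have hs := suppLe_of_le hρ.1 h
  unfold Dp
  split_ifs with h1 h2 h3 h4
  · unfold Dinf
    rw [if_pos ⟨c, hc.le, h⟩]
    have hlow : ∀ b ∈ {c : ℝ | 0 ≤ c ∧ (c • σ - ρ).PosSemidef}, 1 ≤ b := by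
      rintro b ⟨-, hb⟩
      have := traceR_nonneg hb
      rw [traceR_sub, traceR_rsmul, hρ1, traceR_one_of hσ1] at this
      linarith
    have hi : 1 ≤ sInf {c : ℝ | 0 ≤ c ∧ (c • σ - ρ).PosSemidef} := le_csInf ⟨c, hc.le, h⟩ hlow
    have hi2 : sInf {c : ℝ | 0 ≤ c ∧ (c • σ - ρ).PosSemidef} ≤ c :=
      csInf_le ⟨1, hlow⟩ ⟨hc.le, h⟩
    exact_mod_cast Real.log_le_log (by linarith) hi2
  · unfold DU
    rw [if_pos hs]
    exact_mod_cast main_one hρ.1 hρ1 hσ hc h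
  · exact absurd hs h3.2
  · exfalso
    have hp1 : 1 < p.toReal := by
      rw [← ENNReal.toReal_one]
      exact (ENNReal.toReal_lt_toReal ENNReal.one_ne_top h1).2 (lt_of_le_of_ne hp (Ne.symm h2))
    set S := mpow σ ((1 - p.toReal)/(2*p.toReal)) with hS
    have hSh : Sᴴ = S := mpow_isHermitian _ _
    have hX : (sandwich p.toReal ρ σ).PosSemidef := by
      have := hρ.1.mul_mul_conjTranspose_same S
      rw [hSh] at this
      exact this
    refine traceR_mpow_ne_zero hX ?_ (by linarith) h4
    rw [sandwich, ← hS, traceR_mul_comm, ← Matrix.mul_assoc, traceR_mul_comm]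
    obtain ⟨w, l, hw, hf, -, -, hl, hw1, -⟩ := spectral σ ρ hσ.1 hρ.1
    rw [show S * S = cfc (fun x : ℝ => x ^ ((1 - p.toReal)/(2*p.toReal)) *
      x ^ ((1 - p.toReal)/(2*p.toReal))) σ from mpow_mul_mpow _ _ _ fun _ _ => rfl, hf]
    by_contra hcon
    have hnn : ∀ i ∈ Finset.univ, 0 ≤ w i * (l i ^ ((1 - p.toReal)/(2*p.toReal)) *
      l i ^ ((1 - p.toReal)/(2*p.toReal))) := by
      intro i _
      have := Real.rpow_pos_of_pos (spec_pos hσ _ (hl i)) ((1 - p.toReal)/(2*p.toReal))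
      exact mul_nonneg (hw i) (by positivity)
    have h0 := le_antisymm (not_lt.1 hcon) (Finset.sum_nonneg hnn)
    have h5 := (Finset.sum_eq_zero_iff_of_nonneg hnn).1 h0
    have h6 : ∑ i, w i = 0 := by
      refine Finset.sum_eq_zero fun i hi => ?_
      rcases mul_eq_zero.1 (h5 i hi) with h7 | h7
      · exact h7
      · have := Real.rpow_pos_of_pos (spec_pos hσ _ (hl i)) ((1 - p.toReal)/(2*p.toReal))
        nlinarith
    rw [hw1, hρ1] at h6
    norm_num at h6
  · have hp1 : 1 < p.toReal := by
      rw [← ENNReal.toReal_one]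
      exact (ENNReal.toReal_lt_toReal ENNReal.one_ne_top h1).2 (lt_of_le_of_ne hp (Ne.symm h2))
    have h5 := main_p hρ.1 hσ hc h hp1
    rw [hρ1, mul_one] at h5
    set S := mpow σ ((1 - p.toReal)/(2*p.toReal)) with hS
    have hSh : Sᴴ = S := mpow_isHermitian _ _
    have hX : (sandwich p.toReal ρ σ).PosSemidef := by
      have := hρ.1.mul_mul_conjTranspose_same S
      rw [hSh] at this
      exact this
    have h6 : 0 ≤ traceR (mpow (sandwich p.toReal ρ σ) p.toReal) :=
      traceR_cfc _ hX.1 _ fun x hx => Real.rpow_nonneg (spec_nonneg hX x hx) _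
    have h7 := Real.log_le_log (lt_of_le_of_ne h6 (Ne.symm h4)) h5
    rw [Real.log_rpow hc] at h7
    have h8 : 0 < p.toReal - 1 := by linarith
    have : (p.toReal - 1)⁻¹ * Real.log (traceR (mpow (sandwich p.toReal ρ σ) p.toReal))
        ≤ Real.log c := by
      rw [inv_mul_le_iff₀ h8]
      exact h7
    exact_mod_cast this

lemma sq_eig {A : Mat n} {Q : n → Mat n} {l : n → ℝ} (hQ1 : ∀ i, (Q i).trace = 1)
    (hAQ : ∀ i, A * Q i = (l i : ℂ) • Q i) {t : ℝ} (hA : A * A = (t : ℂ) • A) (i : n) :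
    l i * l i = t * l i := by
  have h1 : A * A * Q i = (t : ℂ) • (l i : ℂ) • Q i := by
    rw [hA, Matrix.smul_mul, hAQ]
  rw [Matrix.mul_assoc, hAQ, Matrix.mul_smul, hAQ] at h1
  have h2 := congrArg Matrix.trace h1
  simp only [Matrix.trace_smul, hQ1, smul_eq_mul, mul_one] at h2
  exact_mod_cast h2

lemma trace_eq_traceR {A : Mat n} (hA : A.PosSemidef) : A.trace = (traceR A : ℂ) := by
  have := Complex.le_def.1 hA.trace_nonneg
  apply Complex.ext
  · simp [traceR]
  · simpa using this.2.symm

lemma Dp_lower {ρ σ : Mat n} (hρ : IsDensity ρ) (hpure : ∀ Y, ρ * Y * ρ = (ρ * Y).trace • ρ)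
    (hσ : σ.PosSemidef) {c : ℝ} (hc : 0 < c) (h : c * traceR (ρ * σ) ≤ 1)
    (p : ℝ≥0∞) (hp : 1 ≤ p) : (Real.log c : EReal) ≤ Dp p ρ σ := by
  have hρ1 := traceR_one_of hρ
  have hρρ : ρ * ρ = ρ := by
    have := hpure 1
    rwa [Matrix.mul_one, hρ.2, one_smul] at this
  obtain ⟨w, l, hw, hf, hw0, hl, -, hw1, hid⟩ := spectral σ ρ hσ.1 hρ.1
  have hl := hl hσ
  unfold Dp
  split_ifs with h1 h2 h3 h4
  · unfold Dinf
    split_ifs with h5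
    · have : c ≤ sInf {c : ℝ | 0 ≤ c ∧ (c • σ - ρ).PosSemidef} := by
        refine le_csInf h5 ?_
        rintro b ⟨hb0, hb⟩
        have h6 := posSemidef_trace_mul_nonneg hρ.1 hb
        rw [Matrix.mul_sub, traceR_sub, hρρ, hρ1, Matrix.mul_smul, traceR_rsmul] at h6
        have h7 := posSemidef_trace_mul_nonneg hρ.1 hσ
        by_contra hlt
        push Not at hlt
        rcases h7.eq_or_lt with h8 | h8
        · rw [← h8] at h6; linarith
        · nlinarith
      exact_mod_cast Real.log_le_log hc this
    · exact le_top
  · unfold DU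
    split_ifs with h5
    · have hlog : mlog ρ = 0 := by
        obtain ⟨Q, x, hQ, hQ1, hQs, hf, hAQ, -, -⟩ := resolution ρ hρ.1.1
        rw [mlog, hf]
        refine Finset.sum_eq_zero fun i _ => ?_
        have h6 := sq_eig hQ1 hAQ (t := 1) (by simpa using hρρ) i
        have h7 : x i = 0 ∨ x i = 1 := by
          by_cases h8 : x i = 0
          · exact Or.inl h8
          · exact Or.inr (mul_right_cancel₀ h8 h6)
        rcases h7 with h7 | h7 <;> simp [h7]
      rw [hlog, Matrix.mul_zero, zero_sub]
      have h6 : traceR (-(ρ * mlog σ)) = - ∑ i, w i * Real.log (l i) := by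
        rw [← hf]; simp [traceR, mlog]
      rw [h6]
      have h7 : ∑ i, w i * Real.log (l i) ≤ ∑ i, w i * (c * l i - 1 - Real.log c) := by
        refine Finset.sum_le_sum fun i _ => ?_
        by_cases h8 : l i = 0
        · simp [hw0 h5 i h8]
        · have h9 : 0 < l i := lt_of_le_of_ne (hl i) (Ne.symm h8)
          refine mul_le_mul_of_nonneg_left ?_ (hw i)
          have := Real.log_le_sub_one_of_pos (mul_pos hc h9)
          rw [Real.log_mul hc.ne' h8] at this
          linarith
      have h8 : ∑ i, w i * (c * l i - 1 - Real.log c) =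
          c * ∑ i, w i * l i - (1 + Real.log c) * ∑ i, w i := by
        rw [Finset.mul_sum, Finset.mul_sum, ← Finset.sum_sub_distrib]
        exact Finset.sum_congr rfl fun i _ => by ring
      rw [h8, hid, hw1, hρ1] at h7
      have : Real.log c ≤ - ∑ i, w i * Real.log (l i) := by linarith
      exact_mod_cast this
    · exact le_top
  · exact le_top
  · exact le_top
  · have hp1 : 1 < p.toReal := by
      rw [← ENNReal.toReal_one]
      exact (ENNReal.toReal_lt_toReal ENNReal.one_ne_top h1).2 (lt_of_le_of_ne hp (Ne.symm h2))
    have hs : suppLe ρ σ := by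
      by_contra hs
      exact h3 ⟨hp1, hs⟩
    set q := p.toReal with hq
    set e : ℝ := (1 - q)/(2*q) with he
    set S := mpow σ e with hS
    set a : ℝ := (q - 1)/q with ha
    have ha0 : 0 < a := div_pos (by linarith) (by linarith)
    have haq : a * q = q - 1 := by rw [ha]; field_simp
    have hee : e + e = -a := by rw [he, ha]; field_simp; ring
    have hSh : Sᴴ = S := mpow_isHermitian _ _
    have hX : (sandwich q ρ σ).PosSemidef := by
      have := hρ.1.mul_mul_conjTranspose_same S
      rw [hSh] at this
      exact this
    have hSS : (S * S).PosSemidef := by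
      have := Matrix.posSemidef_conjTranspose_mul_self S
      rwa [hSh] at this
    have hSS2 : S * S = cfc (fun x : ℝ => x ^ e * x ^ e) σ := mpow_mul_mpow _ _ _ fun _ _ => rfl
    set t : ℝ := traceR (ρ * (S * S)) with ht
    have htr : traceR (sandwich q ρ σ) = t := by
      rw [sandwich, ← hS, traceR_mul_comm, ← Matrix.mul_assoc, traceR_mul_comm]
    have htc : (ρ * (S * S)).trace = (t : ℂ) := by
      have h5 : (ρ * (S * S)).trace = (sandwich q ρ σ).trace := by
        rw [sandwich, ← hS, ← Matrix.mul_assoc, Matrix.trace_mul_comm (ρ * S), ← Matrix.mul_assoc]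
      rw [h5, trace_eq_traceR hX, htr]
    have hXX : sandwich q ρ σ * sandwich q ρ σ = (t : ℂ) • sandwich q ρ σ := by
      rw [sandwich, ← hS, show S * ρ * S * (S * ρ * S) = S * (ρ * (S * S) * ρ) * S by
        simp only [Matrix.mul_assoc], hpure, htc, Matrix.mul_smul, Matrix.smul_mul]
    have ht0 : c ^ a ≤ t := by
      rw [ht, hSS2, hf]
      have h7 : ∑ i, w i * (c ^ a * (1 - a * (c * l i - 1))) ≤ ∑ i, w i * (l i ^ e * l i ^ e) := by
        refine Finset.sum_le_sum fun i _ => ?_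
        by_cases h8 : l i = 0
        · simp [hw0 hs i h8]
        · have h9 : 0 < l i := lt_of_le_of_ne (hl i) (Ne.symm h8)
          refine mul_le_mul_of_nonneg_left ?_ (hw i)
          rw [← Real.rpow_add h9, hee]
          have h10 : l i ^ (-a) = c ^ a * (c * l i) ^ (-a) := by
            rw [Real.mul_rpow hc.le h9.le, ← mul_assoc, ← Real.rpow_add hc]; simp
          rw [h10]
          refine mul_le_mul_of_nonneg_left ?_ (by positivity)
          rw [Real.rpow_def_of_pos (mul_pos hc h9)]
          have h11 := Real.add_one_le_exp (Real.log (c * l i) * -a)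
          have h12 := Real.log_le_sub_one_of_pos (mul_pos hc h9)
          nlinarith
      have h8 : ∑ i, w i * (c ^ a * (1 - a * (c * l i - 1))) =
          c ^ a * ((1 + a) * ∑ i, w i - a * (c * ∑ i, w i * l i)) := by
        rw [Finset.mul_sum, Finset.mul_sum, Finset.mul_sum, ← Finset.sum_sub_distrib,
          Finset.mul_sum]
        exact Finset.sum_congr rfl fun i _ => by ring
      refine le_trans ?_ h7
      rw [h8, hid, hw1, hρ1]
      have : 0 < c ^ a := by positivity
      have h9 : 1 ≤ (1 + a) * 1 - a * (c * traceR (ρ * σ)) := by nlinarith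
      nlinarith
    have htpos : 0 < t := lt_of_lt_of_le (by positivity) ht0
    have htrace : traceR (mpow (sandwich q ρ σ) q) = t ^ q := by
      obtain ⟨Q, x, hQ, hQ1, hQs, hf, hAQ, -, hx0⟩ := resolution _ hX.1
      have hx0 := hx0 hX
      have h7 : mpow (sandwich q ρ σ) q = ((t ^ (q - 1) : ℝ) : ℂ) • sandwich q ρ σ := by
        conv_rhs => rw [← mcfc_id hX.1]
        rw [mpow, hf, hf, Finset.smul_sum]
        refine Finset.sum_congr rfl fun i _ => ?_
        have h6 := sq_eig hQ1 hAQ hXX i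
        rw [smul_smul, ← Complex.ofReal_mul]
        congr 2
        by_cases h8 : x i = 0
        · rw [h8, Real.zero_rpow (by linarith), mul_zero]
        · have h9 : x i = t := mul_right_cancel₀ h8 h6
          rw [h9, ← Real.rpow_add_one htpos.ne']
          ring_nf
      rw [h7, traceR_smul, htr, ← Real.rpow_add_one htpos.ne']
      ring_nf
    have h8 : 0 < q - 1 := by linarith
    have : Real.log c ≤ (q - 1)⁻¹ * Real.log (traceR (mpow (sandwich q ρ σ) q)) := by
      rw [le_inv_mul_iff₀ h8, htrace, Real.log_rpow htpos]
      have h9 := Real.log_le_log (by positivity) ht0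
      rw [Real.log_rpow hc] at h9
      rw [← haq]
      nlinarith
    exact_mod_cast this


/-- The `(a,b)` block of a matrix in `M_k ⊗ M_n`. -/
def blk {k : Type*} (X : Matrix (k × n) (k × n) ℂ) (a b : k) : Mat n :=
  Matrix.of fun s t => X (a, s) (b, t)

lemma blk_ampFun {k : Type*} [Fintype k] [DecidableEq k] (E : Mat n →ₗ[ℂ] Mat n) (X : Mat (k × n))
    (a b : k) : blk (ampFun k E X) a b = E (blk X a b) := by
  ext s t
  rfl

open scoped Kronecker in
lemma mem_tensorSpan_of_blk {k : Type*} [Fintype k] [DecidableEq k] {N : Set (Mat n)}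
    {Y : Mat (k × n)} (h : ∀ a b, blk Y a b ∈ N) : Y ∈ tensorSpan (Set.univ : Set (Mat k)) N := by
  have : Y = ∑ a, ∑ b, Matrix.single a b (1 : ℂ) ⊗ₖ blk Y a b := by
    ext ⟨a, s⟩ ⟨b, t⟩
    simp [Matrix.sum_apply, Matrix.single_apply, blk, ite_and]
  rw [this]
  refine Submodule.sum_mem _ fun a _ => Submodule.sum_mem _ fun b _ => ?_
  exact Submodule.subset_span ⟨_, Set.mem_univ _, _, h a b, rfl⟩

lemma trace_blk {k : Type*} [Fintype k] [DecidableEq k] (X : Mat (k × n)) :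
    X.trace = ∑ a, (blk X a a).trace := by
  simp [Matrix.trace, Fintype.sum_prod_type, blk]

/-- `N` has a trace preserving map satisfying a complete Pimsner–Popa inequality. -/
def SU (N : Set (Mat n)) (c : ℝ) : Prop :=
  ∃ E : Mat n →ₗ[ℂ] Mat n, (∀ x, E x ∈ N) ∧ (∀ x, (E x).trace = x.trace) ∧
    ∀ (k : Type) [Fintype k] [DecidableEq k] (X : Mat (k × n)), X.PosSemidef →
      (c • ampFun k E X - X).PosSemidef

/-- Dual witness for the optimality of the constant `c`. -/
def SL (N : Set (Mat n)) (c : ℝ) : Prop :=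
  ∃ (k : ℕ) (ψ : Fin k × n → ℂ) (G : Mat (Fin k × n)), star ψ ⬝ᵥ ψ = 1 ∧ G.PosSemidef ∧
    (1 - c • G).PosSemidef ∧ ∀ y ∈ tensorSpan (Set.univ : Set (Mat (Fin k))) N,
      (vecMulVec ψ (star ψ) * y).trace = (G * y).trace

lemma posDef_rsmul {A : Mat n} (hA : A.PosDef) {t : ℝ} (ht : 0 < t) : (t • A).PosDef :=
  hA.smul ht

lemma DpCb_le {N : Set (Mat n)} {c : ℝ} (hc : 0 < c) (h : SU N c) (p : ℝ≥0∞) (hp : 1 ≤ p) :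
    DpCb p N ≤ (Real.log c : EReal) := by
  obtain ⟨E, hEN, hEt, hE⟩ := h
  refine iSup_le fun k => iSup₂_le fun ρ hρ => ?_
  replace hρ : IsDensity ρ := hρ.2
  have key : ∀ ε ∈ Set.Ioo (0:ℝ) 1, DpSet p ρ (tensorSpan (Set.univ : Set (Mat (Fin k))) N) ≤
      (Real.log (c / (1 - ε)) : EReal) := by
    intro ε hε
    have h1ε : 0 < 1 - ε := by linarith [hε.2]
    have hne : Nonempty (Fin k × n) := by
      by_contra hne
      rw [not_nonempty_iff] at hne
      have := hρ.2
      simp [Matrix.trace] at this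
    set d : ℝ := ((Fintype.card (Fin k × n) : ℕ) : ℝ) with hd
    have hd0 : 0 < d := by
      rw [hd]; exact_mod_cast Fintype.card_pos
    set ρ' : Mat (Fin k × n) := (1 - ε) • ρ + (ε / d) • 1 with hρ'
    have hone : ((ε / d) • (1 : Mat (Fin k × n))).PosDef :=
      posDef_rsmul Matrix.PosDef.one (div_pos hε.1 hd0)
    have hρ'd : ρ'.PosDef := Matrix.PosDef.posSemidef_add (hρ.1.smul h1ε.le) hone
    have hρ't : ρ'.trace = 1 := by
      rw [hρ', Matrix.trace_add, Matrix.trace_smul, Matrix.trace_smul, hρ.2, Matrix.trace_one]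
      have : (ε / d) • ((Fintype.card (Fin k × n) : ℕ) : ℂ) = (ε : ℂ) := by
        rw [Complex.real_smul, ← Complex.ofReal_natCast, ← hd, ← Complex.ofReal_mul,
          div_mul_cancel₀ _ hd0.ne']
      rw [this, Complex.real_smul]
      push_cast
      ring
    set σ := ampFun (Fin k) E ρ' with hσ
    have h1 := hE (Fin k) ρ' hρ'd.posSemidef
    have hcσ : (c • σ).PosDef := by
      have := Matrix.PosDef.posSemidef_add h1 hρ'd
      rwa [sub_add_cancel] at this
    have hσd : σ.PosDef := by
      have := posDef_rsmul hcσ (inv_pos.2 hc)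
      rwa [smul_smul, inv_mul_cancel₀ hc.ne', one_smul] at this
    have hσt : σ.trace = 1 := by
      rw [← hρ't, trace_blk, trace_blk]
      exact Finset.sum_congr rfl fun a _ => by rw [hσ, blk_ampFun, hEt]
    have hmem : σ ∈ tensorSpan (Set.univ : Set (Mat (Fin k))) N :=
      mem_tensorSpan_of_blk fun a b => by rw [hσ, blk_ampFun]; exact hEN _
    have hdens : IsDensity σ := ⟨hσd.posSemidef, hσt⟩
    refine (iInf₂_le σ ⟨hmem, hdens⟩).trans ?_
    refine Dp_upper hρ hσd hdens (div_pos hc h1ε) ?_ p hp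
    have h2 := (h1.add hone.posSemidef).smul (inv_pos.2 h1ε).le
    convert h2 using 1
    rw [hρ', ← sub_sub, sub_add_cancel, smul_sub, smul_smul, smul_smul, inv_mul_cancel₀ h1ε.ne',
      one_smul, div_eq_inv_mul]
  have hlim : Filter.Tendsto (fun ε : ℝ => ((Real.log (c / (1 - ε)) : ℝ) : EReal))
      (nhdsWithin 0 (Set.Ioi 0)) (nhds ((Real.log c : ℝ) : EReal)) := by
    refine (continuous_coe_real_ereal.tendsto _).comp ?_
    have : ContinuousAt (fun ε : ℝ => Real.log (c / (1 - ε))) 0 := by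
      refine ContinuousAt.log ?_ (by simpa using hc.ne')
      refine ContinuousAt.div continuousAt_const (by fun_prop) (by norm_num)
    have h2 := this.tendsto
    simp only [sub_zero, div_one] at h2
    exact h2.mono_left nhdsWithin_le_nhds
  refine ge_of_tendsto hlim ?_
  filter_upwards [Ioo_mem_nhdsGT (show (0:ℝ) < 1 by norm_num)] with ε hε
  exact key ε hε

lemma le_DpCb {N : Set (Mat n)} {c : ℝ} (hc : 0 < c) (h : SL N c) (p : ℝ≥0∞) (hp : 1 ≤ p) :
    (Real.log c : EReal) ≤ DpCb p N := by
  obtain ⟨k, ψ, G, hψ, hG, hG1, hy⟩ := h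
  have hρ : IsDensity (vecMulVec ψ (star ψ)) := by
    refine ⟨Matrix.posSemidef_vecMulVec_self_star ψ, ?_⟩
    rw [Matrix.trace_vecMulVec, dotProduct_comm, hψ]
  refine le_iSup_of_le k (le_iSup₂_of_le (vecMulVec ψ (star ψ)) ⟨Set.mem_univ _, hρ⟩ ?_)
  refine le_iInf₂ fun σ hσ => ?_
  refine Dp_lower hρ ?_ hσ.2.1 hc ?_ p hp
  · intro Y
    rw [Matrix.vecMulVec_mul, Matrix.vecMulVec_mul_vecMulVec, Matrix.trace_vecMulVec,
      dotProduct_comm ψ]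
    ext i j
    simp [vecMulVec_apply]
    ring
  · have h1 : traceR (vecMulVec ψ (star ψ) * σ) = traceR (G * σ) := by
      simp only [traceR, hy σ hσ.1]
    have h2 := traceR_mul_mono hσ.2.1 hG1
    have h3 := posSemidef_trace_mul_nonneg hσ.2.1 hG1
    rw [Matrix.mul_sub, traceR_sub, Matrix.mul_one, Matrix.mul_smul, traceR_rsmul,
      traceR_one_of hσ.2] at h3
    rw [h1, traceR_mul_comm]
    linarith

lemma DpCb_eq {N : Set (Mat n)} {c : ℝ} (hc : 0 < c) (h : SU N c) (h' : SL N c)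
    (p : ℝ≥0∞) (hp : 1 ≤ p) : DpCb p N = (Real.log c : EReal) :=
  le_antisymm (DpCb_le hc h p hp) (le_DpCb hc h' p hp)

lemma DpCb_bot [IsEmpty n] (N : Set (Mat n)) (p : ℝ≥0∞) : DpCb p N = ⊥ := by
  rw [eq_bot_iff]
  refine iSup_le fun k => iSup₂_le fun ρ hρ => ?_
  have := hρ.2.2
  simp [Matrix.trace] at this


/-- The trace preserving conditional expectation onto a star subalgebra. -/
lemma exists_condExp (N : StarSubalgebra ℂ (Mat n)) :
    ∃ E : Mat n →ₗ[ℂ] Mat n, (∀ x, E x ∈ N) ∧ ∀ x, ∀ y ∈ N, (E x * y).trace = (x * y).trace := by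
  set V : Submodule ℂ (Mat n) := Subalgebra.toSubmodule N.toSubalgebra with hV
  have hmem : ∀ x, x ∈ V ↔ x ∈ N := fun x => Iff.rfl
  set B : Mat n →ₗ[ℂ] Mat n →ₗ[ℂ] ℂ :=
    (LinearMap.mul ℂ (Mat n)).compr₂ (Matrix.traceLinearMap n ℂ ℂ) with hB
  have hBa : ∀ x y, B x y = (x * y).trace := fun x y => rfl
  set Ψ : Mat n →ₗ[ℂ] Module.Dual ℂ V := (LinearMap.lcomp ℂ ℂ V.subtype).comp B with hΨ
  have hΨa : ∀ x (y : V), Ψ x y = (x * y.1).trace := fun x y => rfl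
  set Φ : V →ₗ[ℂ] Module.Dual ℂ V := Ψ.comp V.subtype with hΦ
  have hinj : Function.Injective Φ := by
    rw [injective_iff_map_eq_zero]
    intro u hu
    have hs : star u.1 ∈ N := star_mem ((hmem _).1 u.2)
    have h1 : Φ u ⟨star u.1, hs⟩ = 0 := by rw [hu]; rfl
    have h2 : (u.1 * u.1ᴴ).trace = 0 := h1
    rw [Matrix.trace_mul_conjTranspose_self_eq_zero_iff] at h2
    exact Subtype.ext h2
  set e := LinearMap.linearEquivOfInjective Φ hinj (Subspace.dual_finrank_eq).symm with he
  refine ⟨V.subtype.comp (e.symm.toLinearMap.comp Ψ), fun x => (e.symm (Ψ x)).2, ?_⟩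
  intro x y hy
  have h1 : e (e.symm (Ψ x)) = Ψ x := e.apply_symm_apply _
  have h2 := LinearMap.congr_fun h1 (⟨y, hy⟩ : V)
  exact h2

/-- Block matrices with entries in `N`. -/
def blkAlg (k : Type*) [Fintype k] [DecidableEq k] (N : StarSubalgebra ℂ (Mat n)) :
    StarSubalgebra ℂ (Mat (k × n)) where
  carrier := {X | ∀ a b, blk X a b ∈ N}
  mul_mem' := by
    intro X Y hX hY a b
    have : blk (X * Y) a b = ∑ c, blk X a c * blk Y c b := by
      ext s t
      simp [blk, Matrix.mul_apply, Matrix.sum_apply, Fintype.sum_prod_type]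
    rw [this]
    exact sum_mem fun c _ => mul_mem (hX a c) (hY c b)
  add_mem' := by
    intro X Y hX hY a b
    exact add_mem (hX a b) (hY a b)
  algebraMap_mem' := by
    intro r a b
    by_cases hab : a = b
    · subst hab
      have : blk (algebraMap ℂ (Mat (k × n)) r) a a = algebraMap ℂ (Mat n) r := by
        ext s t
        simp [blk, Matrix.algebraMap_matrix_apply]
      rw [this]
      exact algebraMap_mem _ _
    · have : blk (algebraMap ℂ (Mat (k × n)) r) a b = 0 := by
        ext s t
        simp [blk, Matrix.algebraMap_matrix_apply, hab]
      rw [this]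
      exact zero_mem _
  star_mem' := by
    intro X hX a b
    have : blk (star X) a b = star (blk X b a) := by
      ext s t
      simp [blk]
    rw [this]
    exact star_mem (hX b a)

lemma mem_blkAlg {k : Type*} [Fintype k] [DecidableEq k] {N : StarSubalgebra ℂ (Mat n)}
    {X : Mat (k × n)} : X ∈ blkAlg k N ↔ ∀ a b, blk X a b ∈ N := Iff.rfl

lemma tensorSpan_sub_blkAlg {k : Type*} [Fintype k] [DecidableEq k] {N : StarSubalgebra ℂ (Mat n)}
    {X : Mat (k × n)} (hX : X ∈ tensorSpan (Set.univ : Set (Mat k)) (N : Set (Mat n))) :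
    X ∈ blkAlg k N := by
  suffices h : ∀ z ∈ {z : Mat (k × n) | ∃ x ∈ (Set.univ : Set (Mat k)), ∃ y ∈ (N : Set (Mat n)),
      z = Matrix.kroneckerMap (fun p q => p * q) x y}, z ∈ blkAlg k N by
    exact (Submodule.span_le (p := Subalgebra.toSubmodule (blkAlg k N).toSubalgebra)).2 h hX
  · rintro z ⟨x, -, y, hy, rfl⟩ a b
    have : blk (Matrix.kroneckerMap (fun p q => p * q) x y) a b = x a b • y := by
      ext s t
      simp [blk]
    rw [this]
    exact SMulMemClass.smul_mem _ hy

lemma cfc_mem_blkAlg {k : Type*} [Fintype k] [DecidableEq k] {N : StarSubalgebra ℂ (Mat n)}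
    {C : Mat (k × n)} (hC : C ∈ blkAlg k N) (f : ℝ → ℝ) : cfc f C ∈ blkAlg k N := by
  have : IsClosed ((blkAlg k N : StarSubalgebra ℂ (Mat (k × n))) : Set (Mat (k × n))) :=
    (Submodule.closed_of_finiteDimensional
      (Subalgebra.toSubmodule (blkAlg k N).toSubalgebra) : _)
  by_cases hs : IsSelfAdjoint C
  · exact cfc_mem (S := StarSubalgebra ℂ (Mat (k × n))) (s := blkAlg k N) f hC
  · rw [cfc_apply_of_not_predicate C hs]
    exact zero_mem _

lemma condExp_amp {k : Type*} [Fintype k] [DecidableEq k] {N : StarSubalgebra ℂ (Mat n)}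
    {E : Mat n →ₗ[ℂ] Mat n} (hE : ∀ x, ∀ y ∈ N, (E x * y).trace = (x * y).trace)
    (X : Mat (k × n)) {Y : Mat (k × n)} (hY : Y ∈ blkAlg k N) :
    (ampFun k E X * Y).trace = (X * Y).trace := by
  have key : ∀ Z : Mat (k × n), (Z * Y).trace = ∑ a, ∑ c, (blk Z a c * blk Y c a).trace := by
    intro Z
    rw [trace_blk]
    refine Finset.sum_congr rfl fun a _ => ?_
    rw [← Matrix.trace_sum]
    congr 1
    ext s t
    simp [blk, Matrix.mul_apply, Matrix.sum_apply, Fintype.sum_prod_type]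
  rw [key, key]
  refine Finset.sum_congr rfl fun a _ => Finset.sum_congr rfl fun c _ => ?_
  rw [blk_ampFun, hE _ _ (hY c a)]

lemma condExp_star {N : StarSubalgebra ℂ (Mat n)}
    {E : Mat n →ₗ[ℂ] Mat n} (hEN : ∀ x, E x ∈ N)
    (hE : ∀ x, ∀ y ∈ N, (E x * y).trace = (x * y).trace) (x : Mat n) :
    E xᴴ = (E x)ᴴ := by
  have hs : ∀ y ∈ N, yᴴ ∈ N := fun y hy => star_mem hy
  have h1 : ∀ y ∈ N, ((E xᴴ - (E x)ᴴ) * y).trace = 0 := by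
    intro y hy
    rw [Matrix.sub_mul, Matrix.trace_sub, hE _ _ hy]
    have h2 := congrArg star (hE x yᴴ (hs y hy))
    rw [← Matrix.trace_conjTranspose, ← Matrix.trace_conjTranspose, Matrix.conjTranspose_mul,
      Matrix.conjTranspose_mul, Matrix.conjTranspose_conjTranspose, Matrix.trace_mul_comm,
      Matrix.trace_mul_comm y] at h2
    rw [h2, sub_self]
  have h3 := h1 ((E xᴴ - (E x)ᴴ)ᴴ) (hs _ (sub_mem (hEN _) (hs _ (hEN _))))
  rw [Matrix.trace_mul_conjTranspose_self_eq_zero_iff] at h3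
  exact sub_eq_zero.1 h3

lemma amp_hermitian {k : Type*} [Fintype k] [DecidableEq k] {N : StarSubalgebra ℂ (Mat n)}
    {E : Mat n →ₗ[ℂ] Mat n} (hEN : ∀ x, E x ∈ N)
    (hE : ∀ x, ∀ y ∈ N, (E x * y).trace = (x * y).trace) {X : Mat (k × n)} (hX : X.IsHermitian) :
    (ampFun k E X).IsHermitian := by
  ext ⟨a, s⟩ ⟨b, t⟩
  have h1 : blk (ampFun k E X) b a = (blk (ampFun k E X) a b)ᴴ := by
    rw [blk_ampFun, blk_ampFun, ← condExp_star hEN hE]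
    congr 1
    ext u v
    exact (hX.apply (b, u) (a, v)).symm
  have h2 := congrFun (congrFun h1 t) s
  simp only [blk, Matrix.of_apply, Matrix.conjTranspose_apply] at h2
  rw [Matrix.conjTranspose_apply, h2, star_star]

lemma amp_apply {k : Type*} [Fintype k] [DecidableEq k] (E : Mat n →ₗ[ℂ] Mat n) (X : Mat (k × n))
    (a b : k) (s t : n) : ampFun k E X (a, s) (b, t) =
      ∑ u, ∑ v, X (a, u) (b, v) * E (Matrix.single u v 1) s t := by
  have h : ∀ x : Mat n, E x s t = ∑ u, ∑ v, x u v * E (Matrix.single u v 1) s t := by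
    intro x
    have : x = ∑ u, ∑ v, x u v • Matrix.single u v (1 : ℂ) := by
      conv_lhs => rw [Matrix.matrix_eq_sum_single x]
      simp [Matrix.smul_single]
    conv_lhs => rw [this]
    simp only [map_sum, Matrix.sum_apply, map_smul, Matrix.smul_apply, smul_eq_mul]
  exact h _

/-- A Hermitian element whose trace against nonnegative functions of itself is nonnegative. -/
lemma psd_of_negPart {C : Mat n} (hC : C.IsHermitian)
    (h : 0 ≤ traceR (C * cfc (fun x : ℝ => max (-x) 0) C)) : C.PosSemidef := by
  obtain ⟨Q, l, hQ, hQt, hQ1, hf, hCQ, -, -⟩ := resolution C hC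
  have h1 : traceR (C * cfc (fun x : ℝ => max (-x) 0) C) = ∑ i, l i * max (-(l i)) 0 := by
    rw [hf, Finset.mul_sum, traceR_sum]
    refine Finset.sum_congr rfl fun i _ => ?_
    rw [Matrix.mul_smul, hCQ, traceR_smul, traceR_smul, traceR, hQt]
    simp
    ring
  rw [h1] at h
  have h2 : ∀ i ∈ Finset.univ, l i * max (-(l i)) 0 ≤ 0 := by
    intro i _
    rcases le_total 0 (l i) with h0 | h0
    · rw [max_eq_right (by linarith)]; simp
    · rw [max_eq_left (by linarith)]; nlinarith
  have h3 := (Finset.sum_eq_zero_iff_of_nonpos h2).1 (le_antisymm (Finset.sum_nonpos h2) h)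
  have h4 : ∀ i, 0 ≤ l i := by
    intro i
    have := h3 i (Finset.mem_univ _)
    by_contra hneg
    push Not at hneg
    rw [max_eq_left (by linarith)] at this
    nlinarith
  rw [← mcfc_id hC, hf]
  refine Matrix.posSemidef_sum _ fun i _ => (hQ i).smul ?_
  exact_mod_cast h4 i


open scoped MatrixOrder Matrix.Norms.L2Operator in
lemma psd_factor {A : Mat n} (hA : A.PosSemidef) : ∃ Y : Mat n, A = star Y * Y :=
  (CStarAlgebra.nonneg_iff_eq_star_mul_self).1 hA.nonneg

lemma vmv_conj {m : Type*} [Fintype m] [DecidableEq m] (A : Matrix m n ℂ) (v : n → ℂ) :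
    vecMulVec (A *ᵥ v) (star (A *ᵥ v)) = A * vecMulVec v (star v) * Aᴴ := by
  rw [Matrix.mul_vecMulVec, Matrix.vecMulVec_mul, Matrix.star_mulVec]

lemma trace_vmv (v : n → ℂ) (z : Mat n) :
    (vecMulVec v (star v) * z).trace = star v ⬝ᵥ (z *ᵥ v) := by
  rw [Matrix.vecMulVec_mul, Matrix.trace_vecMulVec, dotProduct_comm, Matrix.dotProduct_mulVec]

lemma vmv_le {v : n → ℂ} {c : ℝ} (hc : 0 < c) (hv : star v ⬝ᵥ v = (c : ℂ)) :
    (c • (1 : Mat n) - vecMulVec v (star v)).PosSemidef := by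
  set M := vecMulVec v (star v) with hM
  have hMh : Mᴴ = M := (Matrix.posSemidef_vecMulVec_self_star v).1
  have hMM : M * M = c • M := by
    rw [hM, Matrix.vecMulVec_mul_vecMulVec, hv]
    ext i j
    simp [vecMulVec_apply]
    ring
  have h1 : c • (1 : Mat n) - M = c⁻¹ • ((c • (1 : Mat n) - M)ᴴ * (c • (1 : Mat n) - M)) := by
    have : (c • (1 : Mat n) - M)ᴴ = c • (1 : Mat n) - M := by
      rw [Matrix.conjTranspose_sub, hMh, Matrix.conjTranspose_smul, Matrix.conjTranspose_one]
      simp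
    rw [this, Matrix.mul_sub, Matrix.sub_mul, Matrix.sub_mul, hMM]
    simp only [Matrix.smul_mul, Matrix.mul_smul, Matrix.one_mul, Matrix.mul_one, smul_sub,
      smul_smul, inv_mul_cancel₀ hc.ne', one_smul, sub_self, sub_zero]
    rw [← mul_assoc, inv_mul_cancel₀ hc.ne', one_mul]
  rw [h1]
  exact (Matrix.posSemidef_conjTranspose_mul_self _).smul (inv_pos.2 hc).le

/-- Everything about the reduced Choi-type matrix. -/
lemma exists_SU_SL {m : ℕ} [NeZero m] (N : StarSubalgebra ℂ (Mat (Fin m))) :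
    ∃ c : ℝ, 0 < c ∧ SU (N : Set (Mat (Fin m))) c ∧ SL (N : Set (Mat (Fin m))) c := by
  obtain ⟨E, hEN, hE⟩ := exists_condExp N
  set Ω : Fin m × Fin m → ℂ := fun x => if x.1 = x.2 then 1 else 0 with hΩ
  set M := vecMulVec Ω (star Ω) with hM
  have hMp : M.PosSemidef := Matrix.posSemidef_vecMulVec_self_star Ω
  set C := ampFun (Fin m) E M with hC
  have hCA : C ∈ blkAlg (Fin m) N := fun a b => by
    rw [hC, blk_ampFun]; exact hEN _
  have hCh : C.IsHermitian := amp_hermitian hEN hE hMp.1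
  have hCt : ∀ z ∈ blkAlg (Fin m) N, (C * z).trace = (M * z).trace :=
    fun z hz => condExp_amp hE M hz
  have hCp : C.PosSemidef := by
    refine psd_of_negPart hCh ?_
    have h1 := hCt _ (cfc_mem_blkAlg hCA (fun x : ℝ => max (-x) 0))
    rw [traceR, h1]
    exact posSemidef_trace_mul_nonneg hMp (cfc_posSemidef C _ fun x _ => le_max_right _ _)
  have hspec := spec_nonneg hCp
  set s := cfc (fun x : ℝ => if x = 0 then 0 else 1) C with hs
  set q := cfc (fun x : ℝ => if x = 0 then 1 else 0) C with hq
  set W := mpow C (-1/2) with hW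
  set R := mpow C (1/2) with hR
  have hsp : s.PosSemidef := cfc_posSemidef C _ fun x _ => by split_ifs <;> norm_num
  have hqp : q.PosSemidef := cfc_posSemidef C _ fun x _ => by split_ifs <;> norm_num
  have hsA : s ∈ blkAlg (Fin m) N := cfc_mem_blkAlg hCA _
  have hqA : q ∈ blkAlg (Fin m) N := cfc_mem_blkAlg hCA _
  have hWA : W ∈ blkAlg (Fin m) N := cfc_mem_blkAlg hCA _
  have hWh : Wᴴ = W := mpow_isHermitian C _
  have hRh : Rᴴ = R := mpow_isHermitian C _
  have hRW : R * W = s := mpow_mul_mpow _ _ _ fun x hx => by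
    rcases (hspec x hx).eq_or_lt with h0 | h0
    · subst h0; norm_num
    · rw [← Real.rpow_add h0, if_neg h0.ne']; norm_num
  have hWR : W * R = s := mpow_mul_mpow _ _ _ fun x hx => by
    rcases (hspec x hx).eq_or_lt with h0 | h0
    · subst h0; norm_num
    · rw [← Real.rpow_add h0, if_neg h0.ne']; norm_num
  have hRR : R * R = C := by
    rw [← mcfc_id hCh]
    exact mpow_mul_mpow _ _ _ fun x hx => by
      rw [← Real.rpow_add_of_nonneg (hspec x hx) (by norm_num) (by norm_num)]; norm_num
  have hss : s * s = s := by
    rw [hs, ← cfc_mul _ _ C (cont_spec _ _) (cont_spec _ _)]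
    congr 1
    ext x
    split_ifs <;> norm_num
  have hsq : s + q = 1 := by
    rw [hs, hq, ← cfc_add C _ _ (cont_spec _ _) (cont_spec _ _)]
    rw [← cfc_one ℝ C hCh]
    congr 1
    ext x
    simp only [Pi.one_apply]
    split_ifs <;> norm_num
  have hCq : C * q = 0 := by
    have h1 : C * q = cfc (fun x : ℝ => x * (if x = 0 then 1 else 0)) C := by
      rw [cfc_mul _ _ C (cont_spec _ _) (cont_spec _ _), mcfc_id hCh]
    rw [h1, ← cfc_zero ℝ C]
    congr 1
    ext x
    simp
  have hqΩ : q *ᵥ Ω = 0 := by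
    rw [← hqp.dotProduct_mulVec_zero_iff, ← trace_vmv, ← hM, ← hCt _ hqA, hCq, Matrix.trace_zero]
  set ψ := W *ᵥ Ω with hψ
  have hRψ : R *ᵥ ψ = Ω := by
    rw [hψ, Matrix.mulVec_mulVec, hRW]
    have : (s + q) *ᵥ Ω = Ω := by rw [hsq, Matrix.one_mulVec]
    rwa [Matrix.add_mulVec, hqΩ, add_zero] at this
  set c : ℝ := (star ψ ⬝ᵥ ψ).re with hc
  have hψ0 : ψ ≠ 0 := by
    intro h0
    have h1 : Ω = 0 := by rw [← hRψ, h0, Matrix.mulVec_zero]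
    have := congrFun h1 (0, 0)
    simp [hΩ] at this
  have hpos : 0 < star ψ ⬝ᵥ ψ := dotProduct_star_self_pos_iff.2 hψ0
  have hψc : star ψ ⬝ᵥ ψ = (c : ℂ) := by
    have := (Complex.pos_iff.1 hpos).2
    apply Complex.ext
    · simp [hc]
    · simpa using this.symm
  have hc0 : 0 < c := (Complex.pos_iff.1 hpos).1
  have hle : (c • C - M).PosSemidef := by
    have h1 := (vmv_le hc0 hψc).mul_mul_conjTranspose_same R
    rw [Matrix.mul_sub, Matrix.sub_mul, ← vmv_conj, hRψ, ← hM, Matrix.mul_smul, Matrix.smul_mul,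
      Matrix.mul_one, hRh, hRR] at h1
    exact h1
  refine ⟨c, hc0, ⟨E, hEN, ?_, ?_⟩, ?_⟩
  · intro x
    simpa using hE x 1 (one_mem _)
  · intro k _ _ X hX
    have rank1 : ∀ φ : k × Fin m → ℂ, (c • ampFun k E (vecMulVec φ (star φ)) -
        vecMulVec φ (star φ)).PosSemidef := by
      intro φ
      set T : Matrix (k × Fin m) (Fin m × Fin m) ℂ :=
        Matrix.of fun a u => if a.2 = u.2 then φ (a.1, u.1) else 0 with hT
      have hTΩ : T *ᵥ Ω = φ := by
        ext ⟨a, s⟩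
        simp [hT, hΩ, Matrix.mulVec, dotProduct, Fintype.sum_prod_type]
      have h1 : vecMulVec φ (star φ) = T * M * Tᴴ := by
        rw [hM, ← vmv_conj, hTΩ]
      have h2 : ampFun k E (vecMulVec φ (star φ)) = T * C * Tᴴ := by
        ext ⟨a, s⟩ ⟨b, t⟩
        rw [amp_apply, Matrix.mul_assoc]
        simp only [Matrix.mul_apply, Fintype.sum_prod_type, hT, hC, Matrix.of_apply,
          Matrix.conjTranspose_apply, amp_apply]
        simp only [hM, hΩ, vecMulVec_apply, Pi.star_apply]
        simp [apply_ite star, ite_mul, mul_ite]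
        refine Finset.sum_congr rfl fun u _ => ?_
        rw [Finset.mul_sum]
        exact Finset.sum_congr rfl fun v _ => by ring
      have h3 := hle.mul_mul_conjTranspose_same T
      rw [Matrix.mul_sub, Matrix.sub_mul, Matrix.mul_smul, Matrix.smul_mul, ← h1, ← h2] at h3
      exact h3
    obtain ⟨Y, hY⟩ := psd_factor hX
    have hXs : X = ∑ r, vecMulVec (fun i => star (Y r i)) (star (fun i => star (Y r i))) := by
      ext i j
      rw [hY, Matrix.sum_apply]
      simp [Matrix.mul_apply, vecMulVec_apply, Matrix.star_apply]
    have hamp : ampFun k E X = ∑ r, ampFun k E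
        (vecMulVec (fun i => star (Y r i)) (star (fun i => star (Y r i)))) := by
      ext ⟨a, s⟩ ⟨b, t⟩
      rw [Matrix.sum_apply]
      simp only [amp_apply]
      rw [Finset.sum_comm]
      conv_rhs => rw [Finset.sum_comm]; enter [2, u]; rw [Finset.sum_comm]
      rw [Finset.sum_comm]
      refine Finset.sum_congr rfl fun u _ => Finset.sum_congr rfl fun v _ => ?_
      rw [← Finset.sum_mul]
      congr 1
      conv_lhs => rw [hXs, Matrix.sum_apply]
    rw [hamp]
    nth_rewrite 1 [hXs]
    rw [Finset.smul_sum, ← Finset.sum_sub_distrib]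
    exact Matrix.posSemidef_sum _ fun r _ => rank1 _
  · have hsqrt : (Real.sqrt c)⁻¹ * (Real.sqrt c)⁻¹ = c⁻¹ := by
      rw [← mul_inv, Real.mul_self_sqrt hc0.le]
    refine ⟨m, ((Real.sqrt c)⁻¹ : ℝ) • ψ, c⁻¹ • s, ?_, hsp.smul (inv_pos.2 hc0).le, ?_, ?_⟩
    · rw [star_smul, smul_dotProduct, dotProduct_smul, hψc, smul_smul, star_trivial, hsqrt,
        Complex.real_smul, ← Complex.ofReal_mul, inv_mul_cancel₀ hc0.ne', Complex.ofReal_one]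
    · rw [smul_smul, mul_inv_cancel₀ hc0.ne', one_smul, ← hsq, add_sub_cancel_left]
      exact hqp
    · intro y hy
      replace hy := tensorSpan_sub_blkAlg hy
      have h1 : vecMulVec (((Real.sqrt c)⁻¹ : ℝ) • ψ) (star (((Real.sqrt c)⁻¹ : ℝ) • ψ)) =
          c⁻¹ • vecMulVec ψ (star ψ) := by
        rw [star_smul, Matrix.smul_vecMulVec, Matrix.vecMulVec_smul, smul_smul, star_trivial, hsqrt]
      rw [h1, Matrix.smul_mul, Matrix.smul_mul, Matrix.trace_smul, Matrix.trace_smul]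
      congr 1
      have h2 : (vecMulVec ψ (star ψ) * y).trace = (M * (W * y * W)).trace := by
        rw [hψ, vmv_conj, hWh, ← hM, Matrix.mul_assoc, Matrix.mul_assoc, Matrix.trace_mul_comm]
        simp only [Matrix.mul_assoc]
      rw [h2, ← hCt _ (mul_mem (mul_mem hWA hy) hWA)]
      have h3 : (C * (W * y * W)).trace = (W * R * (R * W) * y).trace := by
        rw [← hRR]
        conv_rhs => rw [Matrix.mul_assoc, Matrix.mul_assoc, Matrix.trace_mul_comm]
        rw [← Matrix.mul_assoc, ← Matrix.mul_assoc, ]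
        simp only [Matrix.mul_assoc]
      rw [h3, hRW, hWR, hss]


lemma trace_single_ite (u v : n) (c : ℂ) :
    (Matrix.single u v c).trace = if u = v then c else 0 := by
  split_ifs with h
  · subst h; simp
  · exact Matrix.trace_single_eq_of_ne _ _ _ h

open scoped Kronecker in
lemma SU_tensor {n₁ n₂ : Type} [Fintype n₁] [DecidableEq n₁] [Fintype n₂] [DecidableEq n₂]
    {N₁ : Set (Mat n₁)} {N₂ : Set (Mat n₂)} {c₁ c₂ : ℝ} (hc₂ : 0 < c₂)
    (h₁ : SU N₁ c₁) (h₂ : SU N₂ c₂) : SU (tensorSpan N₁ N₂) (c₁ * c₂) := by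
  obtain ⟨E₁, hm₁, ht₁, hp₁⟩ := h₁
  obtain ⟨E₂, hm₂, ht₂, hp₂⟩ := h₂
  set E : Mat (n₁ × n₂) →ₗ[ℂ] Mat (n₁ × n₂) := ∑ u, ∑ v,
    (Matrix.entryLinearMap ℂ ℂ u v).smulRight
      (E₁ (Matrix.single u.1 v.1 1) ⊗ₖ E₂ (Matrix.single u.2 v.2 1)) with hE
  have hEx : ∀ x, E x = ∑ u, ∑ v, x u v •
      (E₁ (Matrix.single u.1 v.1 1) ⊗ₖ E₂ (Matrix.single u.2 v.2 1)) := by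
    intro x
    simp [hE, LinearMap.sum_apply]
  have hEs : ∀ u v, E (Matrix.single u v 1) =
      E₁ (Matrix.single u.1 v.1 1) ⊗ₖ E₂ (Matrix.single u.2 v.2 1) := by
    intro u v
    rw [hEx]
    rw [Finset.sum_eq_single u, Finset.sum_eq_single v]
    · simp
    · intro w _ hw
      simp [hw.symm]
    · simp
    · intro w _ hw
      simp [hw.symm]
    · simp
  refine ⟨E, ?_, ?_, ?_⟩
  · intro x
    rw [hEx]
    refine Submodule.sum_mem _ fun u _ => Submodule.sum_mem _ fun v _ => Submodule.smul_mem _ _ ?_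
    exact Submodule.subset_span ⟨_, hm₁ _, _, hm₂ _, rfl⟩
  · intro x
    rw [hEx]
    conv_rhs => rw [Matrix.matrix_eq_sum_single x]
    simp only [Matrix.trace_sum, Matrix.trace_smul, Matrix.trace_kronecker, ht₁, ht₂]
    refine Finset.sum_congr rfl fun u _ => Finset.sum_congr rfl fun v _ => ?_
    obtain ⟨u1, u2⟩ := u
    obtain ⟨v1, v2⟩ := v
    simp only [trace_single_ite, Prod.mk.injEq]
    by_cases h1 : u1 = v1 <;> by_cases h2 : u2 = v2 <;> simp [h1, h2]
  · intro k _ _ X hX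
    set X' : Mat ((k × n₁) × n₂) :=
      X.submatrix (fun x => (x.1.1, (x.1.2, x.2))) (fun x => (x.1.1, (x.1.2, x.2))) with hX'
    set Y : Mat (k × (n₁ × n₂)) := (ampFun (k × n₁) E₂ X').submatrix
      (fun x => ((x.1, x.2.1), x.2.2)) (fun x => ((x.1, x.2.1), x.2.2)) with hY
    have hA : (c₂ • Y - X).PosSemidef := by
      have h0 : X'.PosSemidef := hX.submatrix _
      have h1 := (hp₂ (k × n₁) X' h0).submatrix
        (fun x : k × (n₁ × n₂) => ((x.1, x.2.1), x.2.2))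
      have h2 : c₂ • Y - X = (c₂ • ampFun (k × n₁) E₂ X' - X').submatrix
          (fun x : k × (n₁ × n₂) => ((x.1, x.2.1), x.2.2))
          (fun x : k × (n₁ × n₂) => ((x.1, x.2.1), x.2.2)) := by
        ext ⟨a, s1, s2⟩ ⟨b, t1, t2⟩
        simp only [hY, hX', Matrix.sub_apply, Matrix.smul_apply, Matrix.submatrix_apply]
      rw [h2]
      exact h1
    have hYp : Y.PosSemidef := by
      have h1 := (hA.add hX).smul (inv_pos.2 hc₂).le
      rwa [sub_add_cancel, smul_smul, inv_mul_cancel₀ hc₂.ne', one_smul] at h1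
    set Y' : Mat ((k × n₂) × n₁) :=
      Y.submatrix (fun x => (x.1.1, (x.2, x.1.2))) (fun x => (x.1.1, (x.2, x.1.2))) with hY'
    set Z : Mat (k × (n₁ × n₂)) := (ampFun (k × n₂) E₁ Y').submatrix
      (fun x => ((x.1, x.2.2), x.2.1)) (fun x => ((x.1, x.2.2), x.2.1)) with hZ
    have hB : (c₁ • Z - Y).PosSemidef := by
      have h0 : Y'.PosSemidef := hYp.submatrix _
      have h1 := (hp₁ (k × n₂) Y' h0).submatrix
        (fun x : k × (n₁ × n₂) => ((x.1, x.2.2), x.2.1))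
      have h2 : c₁ • Z - Y = (c₁ • ampFun (k × n₂) E₁ Y' - Y').submatrix
          (fun x : k × (n₁ × n₂) => ((x.1, x.2.2), x.2.1))
          (fun x : k × (n₁ × n₂) => ((x.1, x.2.2), x.2.1)) := by
        ext ⟨a, s1, s2⟩ ⟨b, t1, t2⟩
        simp only [hZ, hY', Matrix.sub_apply, Matrix.smul_apply, Matrix.submatrix_apply]
      rw [h2]
      exact h1
    have hZE : ampFun k E X = Z := by
      ext ⟨a, s1, s2⟩ ⟨b, t1, t2⟩
      rw [amp_apply]
      simp only [hZ, Matrix.submatrix_apply, amp_apply, hY', hY, hX', hEs,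
        Matrix.kroneckerMap_apply, Fintype.sum_prod_type]
      refine Finset.sum_congr rfl fun u1 _ => ?_
      rw [Finset.sum_comm]
      refine Finset.sum_congr rfl fun v1 _ => ?_
      rw [Finset.sum_mul]
      refine Finset.sum_congr rfl fun u2 _ => ?_
      rw [Finset.sum_mul]
      refine Finset.sum_congr rfl fun v2 _ => ?_
      ring
    rw [hZE]
    have h2 := (hB.smul hc₂.le).add hA
    convert h2 using 1
    rw [smul_sub, smul_smul, mul_comm c₂, sub_add_sub_cancel]

open scoped Kronecker in
lemma SL_tensor {n₁ n₂ : Type} [Fintype n₁] [DecidableEq n₁] [Fintype n₂] [DecidableEq n₂]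
    {N₁ : Set (Mat n₁)} {N₂ : Set (Mat n₂)} {c₁ c₂ : ℝ} (hc₂ : 0 < c₂)
    (h₁ : SL N₁ c₁) (h₂ : SL N₂ c₂) : SL (tensorSpan N₁ N₂) (c₁ * c₂) := by
  obtain ⟨k₁, ψ₁, G₁, hψ₁, hG₁, hl₁, ht₁⟩ := h₁
  obtain ⟨k₂, ψ₂, G₂, hψ₂, hG₂, hl₂, ht₂⟩ := h₂
  set e : Fin (k₁ * k₂) × (n₁ × n₂) ≃ (Fin k₁ × n₁) × (Fin k₂ × n₂) :=
    ((finProdFinEquiv.symm).prodCongr (Equiv.refl _)).trans (Equiv.prodProdProdComm _ _ _ _) with he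
  set ψ : (Fin k₁ × n₁) × (Fin k₂ × n₂) → ℂ := fun x => ψ₁ x.1 * ψ₂ x.2 with hψ
  have hvm : vecMulVec ψ (star ψ) = vecMulVec ψ₁ (star ψ₁) ⊗ₖ vecMulVec ψ₂ (star ψ₂) := by
    ext ⟨a, b⟩ ⟨c, d⟩
    simp [hψ, vecMulVec_apply]
    ring
  refine ⟨k₁ * k₂, ψ ∘ e, (G₁ ⊗ₖ G₂).submatrix e e, ?_, (hG₁.kronecker hG₂).submatrix e, ?_, ?_⟩
  · have h1 : star (ψ ∘ e) ⬝ᵥ (ψ ∘ e) = star ψ ⬝ᵥ ψ := by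
      simp only [dotProduct]
      exact Equiv.sum_comp e (fun x => star ψ x * ψ x)
    have h2 : star ψ ⬝ᵥ ψ = (star ψ₁ ⬝ᵥ ψ₁) * (star ψ₂ ⬝ᵥ ψ₂) := by
      rw [dotProduct, Fintype.sum_prod_type, dotProduct, dotProduct, Finset.sum_mul_sum]
      refine Finset.sum_congr rfl fun u _ => Finset.sum_congr rfl fun v _ => ?_
      simp [hψ]
      ring
    rw [h1, h2, hψ₁, hψ₂, mul_one]
  · have h1 : (1 - (c₁ * c₂) • (G₁ ⊗ₖ G₂)).PosSemidef := by
      have h2 := (hl₁.kronecker (hG₂.smul hc₂.le)).add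
        ((Matrix.PosSemidef.one (n := Fin k₁ × n₁) (R := ℂ)).kronecker hl₂)
      have h5 : (1 - (c₁ * c₂) • (G₁ ⊗ₖ G₂)) = (1 - c₁ • G₁) ⊗ₖ (c₂ • G₂) + 1 ⊗ₖ (1 - c₂ • G₂) := by
        rw [← Matrix.one_kronecker_one (α := ℂ)]
        ext ⟨a, b⟩ ⟨c, d⟩
        simp only [Matrix.kroneckerMap_apply, Matrix.sub_apply, Matrix.smul_apply, Matrix.add_apply,
          Complex.real_smul, Complex.ofReal_mul]
        ring
      rw [h5]
      exact h2
    have h3 := h1.submatrix e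
    have h4 : (1 - (c₁ * c₂) • (G₁ ⊗ₖ G₂)).submatrix e e =
        1 - (c₁ * c₂) • (G₁ ⊗ₖ G₂).submatrix e e := by
      rw [← Matrix.submatrix_one_equiv e]
      rfl
    rwa [h4] at h3
  · intro y hy
    have hre : ∀ (A : Mat ((Fin k₁ × n₁) × (Fin k₂ × n₂))) (y : Mat (Fin (k₁ * k₂) × (n₁ × n₂))),
        (A.submatrix e e * y).trace = (A * y.submatrix e.symm e.symm).trace := by
      intro A y
      have h1 : A.submatrix e e * y = (A * y.submatrix e.symm e.symm).submatrix e e := by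
        rw [Matrix.submatrix_mul_equiv _ _ e e e |>.symm]
        simp
      rw [h1]
      exact Equiv.sum_comp e (fun x => (A * y.submatrix e.symm e.symm) x x)
    have hvs : vecMulVec (ψ ∘ e) (star (ψ ∘ e)) = (vecMulVec ψ (star ψ)).submatrix e e := rfl
    rw [hvs, hre, hre, hvm]
    -- the two sides are linear in `y`
    set L : Mat (Fin (k₁ * k₂) × (n₁ × n₂)) → ℂ := fun y =>
      ((vecMulVec ψ₁ (star ψ₁) ⊗ₖ vecMulVec ψ₂ (star ψ₂)) * y.submatrix e.symm e.symm).trace -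
      ((G₁ ⊗ₖ G₂) * y.submatrix e.symm e.symm).trace with hL
    suffices h : L y = 0 from sub_eq_zero.1 h
    have hL0 : L 0 = 0 := by simp [hL]
    have hLa : ∀ x y, L (x + y) = L x + L y := by
      intro x y
      simp only [hL, Matrix.submatrix_add, Pi.add_apply, Matrix.mul_add, Matrix.trace_add]
      ring
    have hLs : ∀ (r : ℂ) x, L (r • x) = r * L x := by
      intro r x
      simp only [hL, Matrix.submatrix_smul, Pi.smul_apply, Matrix.mul_smul, Matrix.trace_smul,
        smul_eq_mul]
      ring
    have hsub : ∀ (a1 b1 : Fin k₁) (a2 b2 : Fin k₂) (x : Mat n₁) (z : Mat n₂),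
        (Matrix.single (finProdFinEquiv (a1, a2)) (finProdFinEquiv (b1, b2)) (1 : ℂ) ⊗ₖ
          (x ⊗ₖ z)).submatrix e.symm e.symm =
        (Matrix.single a1 b1 (1 : ℂ) ⊗ₖ x) ⊗ₖ (Matrix.single a2 b2 (1 : ℂ) ⊗ₖ z) := by
      intro a1 b1 a2 b2 x z
      ext ⟨⟨p1, s1⟩, p2, s2⟩ ⟨⟨q1, t1⟩, q2, t2⟩
      simp [he, Matrix.single_apply, Equiv.prodProdProdComm]
      by_cases h1 : a1 = p1 <;> by_cases h2 : a2 = p2 <;>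
        by_cases h3 : b1 = q1 <;> by_cases h4 : b2 = q2 <;> simp [h1, h2, h3, h4]
    have base : ∀ (a1 b1 : Fin k₁) (a2 b2 : Fin k₂), ∀ x ∈ N₁, ∀ z ∈ N₂,
        L (Matrix.single (finProdFinEquiv (a1, a2)) (finProdFinEquiv (b1, b2)) (1 : ℂ) ⊗ₖ
          (x ⊗ₖ z)) = 0 := by
      intro a1 b1 a2 b2 x hx z hz
      simp only [hL]
      rw [hsub, ← Matrix.mul_kronecker_mul, ← Matrix.mul_kronecker_mul, Matrix.trace_kronecker,
        Matrix.trace_kronecker, ht₁ _ (Submodule.subset_span ⟨_, Set.mem_univ _, _, hx, rfl⟩),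
        ht₂ _ (Submodule.subset_span ⟨_, Set.mem_univ _, _, hz, rfl⟩), sub_self]
    have step1 : ∀ (i j : Fin (k₁ * k₂)), ∀ w ∈ tensorSpan N₁ N₂,
        L (Matrix.single i j (1 : ℂ) ⊗ₖ w) = 0 := by
      intro i j w hw
      refine Submodule.span_induction (p := fun w _ => L (Matrix.single i j (1 : ℂ) ⊗ₖ w) = 0)
        ?_ ?_ ?_ ?_ hw
      · rintro w ⟨x, hx, z, hz, rfl⟩
        have := base (finProdFinEquiv.symm i).1 (finProdFinEquiv.symm j).1
          (finProdFinEquiv.symm i).2 (finProdFinEquiv.symm j).2 x hx z hz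
        simpa only [Prod.mk.eta, Equiv.apply_symm_apply] using this
      · rw [Matrix.kronecker_zero, hL0]
      · intro x z _ _ h1 h2
        rw [Matrix.kronecker_add, hLa, h1, h2, add_zero]
      · intro r x _ h1
        rw [Matrix.kronecker_smul, hLs, h1, mul_zero]
    refine Submodule.span_induction (p := fun y _ => L y = 0) ?_ hL0 ?_ ?_ hy
    · rintro _ ⟨x, -, w, hw, rfl⟩
      set Lm : Mat (Fin (k₁ * k₂) × (n₁ × n₂)) →ₗ[ℂ] ℂ :=
        { toFun := L, map_add' := hLa, map_smul' := hLs } with hLm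
      have hx : x ⊗ₖ w = ∑ i, ∑ j, x i j • (Matrix.single i j (1 : ℂ) ⊗ₖ w) := by
        ext ⟨a, s⟩ ⟨b, t⟩
        simp [Matrix.sum_apply, Matrix.single_apply, ite_and]
      change Lm _ = 0
      rw [hx, map_sum]
      refine Finset.sum_eq_zero fun i _ => ?_
      rw [map_sum]
      refine Finset.sum_eq_zero fun j _ => ?_
      rw [map_smul]
      change x i j • L _ = 0
      rw [step1 i j w hw, smul_zero]
    · intro x z _ _ h1 h2
      rw [hLa, h1, h2, add_zero]
    · intro r x _ h1
      rw [hLs, h1, mul_zero]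

/-- for unital *-subalgebras `N₁ ⊆ M_{m₁}`, `N₂ ⊆ M_{m₂}` and
`1 ≤ p ≤ ∞`,
`D_{p,cb}(M_{m₁} ⊗ M_{m₂}‖N₁ ⊗ N₂) ≤ D_{p,cb}(M_{m₁}‖N₁) + D_{∞,cb}(M_{m₂}‖N₂)`;
in particular for `p = 1` and `p = ∞` the cb-relative entropy is additive. -/
theorem statement16 {m₁ m₂ : ℕ}
    (N₁ : StarSubalgebra ℂ (Mat (Fin m₁))) (N₂ : StarSubalgebra ℂ (Mat (Fin m₂)))
    (p : ℝ≥0∞) (hp : 1 ≤ p) :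
    DpCb p (tensorSpan (N₁ : Set (Mat (Fin m₁))) (N₂ : Set (Mat (Fin m₂)))) ≤
      DpCb p (N₁ : Set (Mat (Fin m₁))) + DpCb ⊤ (N₂ : Set (Mat (Fin m₂))) ∧
    DpCb 1 (tensorSpan (N₁ : Set (Mat (Fin m₁))) (N₂ : Set (Mat (Fin m₂))))
      = DpCb 1 (N₁ : Set (Mat (Fin m₁))) + DpCb 1 (N₂ : Set (Mat (Fin m₂))) ∧
    DpCb ⊤ (tensorSpan (N₁ : Set (Mat (Fin m₁))) (N₂ : Set (Mat (Fin m₂))))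
      = DpCb ⊤ (N₁ : Set (Mat (Fin m₁))) + DpCb ⊤ (N₂ : Set (Mat (Fin m₂))) := by
  rcases Nat.eq_zero_or_pos m₁ with h1 | h1
  · subst h1
    simp only [DpCb_bot, EReal.bot_add, le_refl, and_self]
  rcases Nat.eq_zero_or_pos m₂ with h2 | h2
  · subst h2
    simp only [DpCb_bot, EReal.add_bot, le_refl, and_self]
  have : NeZero m₁ := ⟨h1.ne'⟩
  have : NeZero m₂ := ⟨h2.ne'⟩
  obtain ⟨c₁, hc₁, hu₁, hl₁⟩ := exists_SU_SL N₁
  obtain ⟨c₂, hc₂, hu₂, hl₂⟩ := exists_SU_SL N₂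
  have hu := SU_tensor hc₂ hu₁ hu₂
  have hl := SL_tensor hc₂ hl₁ hl₂
  have hc := mul_pos hc₁ hc₂
  have hlog : ((Real.log (c₁ * c₂) : ℝ) : EReal) = (Real.log c₁ : EReal) + (Real.log c₂ : EReal) := by
    rw [Real.log_mul hc₁.ne' hc₂.ne', EReal.coe_add]
  refine ⟨?_, ?_, ?_⟩
  · rw [DpCb_eq hc hu hl p hp, DpCb_eq hc₁ hu₁ hl₁ p hp, DpCb_eq hc₂ hu₂ hl₂ ⊤ le_top, hlog]
  · rw [DpCb_eq hc hu hl 1 le_rfl, DpCb_eq hc₁ hu₁ hl₁ 1 le_rfl, DpCb_eq hc₂ hu₂ hl₂ 1 le_rfl, hlog]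
  · rw [DpCb_eq hc hu hl ⊤ le_top, DpCb_eq hc₁ hu₁ hl₁ ⊤ le_top, DpCb_eq hc₂ hu₂ hl₂ ⊤ le_top, hlog]

end GJL
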